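/- There exists a constant C > 0 such that for all integers r ≥ 2, in every r-connected finite simple graph any two longest cycles intersect in at least C · r^{5/8} vertices, i.e., if C1 and C2 are cycles of maximum length in G then |V(C1) ∩ V(C2)| ≥ C · r^{5/8}. -/

import Mathlib

open SimpleGraph

/-- `c` is a longest cycle in `G`: it is a cycle and its length is at least
the length of every cycle in `G`. -/
def IsLongestCycle {V : Type*} (G : SimpleGraph V) {v : V} (c : G.Walk v v) : Prop :=
  c.IsCycle ∧ ∀ (u : V) (c' : G.Walk u u), c'.IsCycle → c'.length ≤ c.length


/-- edges that are extremal in their fibre under `π` w.r.t. an injective key are few -/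
lemma extremal_card {E : Type*} [DecidableEq E] {n : ℕ} (T : Finset E) (π : E → Fin n)
    (N : Finset (Fin n)) (hN : ∀ e ∈ T, π e ∈ N) (key : E → ℤ)
    (hkey : ∀ e ∈ T, ∀ e' ∈ T, π e = π e' → key e = key e' → e = e') :
    ∃ S : Finset E, S.card ≤ N.card ∧
      ∀ e ∈ T, e ∉ S → ∃ e' ∈ T, π e' = π e ∧ key e < key e' := by
  classical
  refine ⟨T.filter (fun e => ∀ e' ∈ T, π e' = π e → key e' ≤ key e), ?_, ?_⟩
  · apply Finset.card_le_card_of_injOn π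
    · intro e he
      simp only [Finset.coe_filter, Set.mem_ofPred_eq] at he
      exact hN e he.1
    · intro e he e' he' h
      simp only [Finset.coe_filter, Set.mem_ofPred_eq] at he he'
      exact hkey e he.1 e' he'.1 h (le_antisymm (he'.2 e he.1 h) (he.2 e' he'.1 h.symm))
  · intro e he hS
    simp only [Finset.mem_filter, he, true_and, not_forall, not_le] at hS
    obtain ⟨e', h1, h2, h3⟩ := hS
    exact ⟨e', h1, h2, h3⟩

lemma middle_aux {n : ℕ} (P : Fin n → Prop) (p : Fin n → ℤ) (a : Fin n)
    (hp : ∀ s, P s → p s = p a → s = a)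
    (h1 : ∃ s, P s ∧ a < s) (h2 : ∃ s, P s ∧ s < a)
    (h3 : ∃ s, P s ∧ p a < p s) (h4 : ∃ s, P s ∧ p s < p a) :
    (∃ s t, P s ∧ P t ∧ s < a ∧ a < t ∧ p s < p a ∧ p a < p t) ∨
      (∃ s t, P s ∧ P t ∧ a < s ∧ t < a ∧ p s < p a ∧ p a < p t) := by
  by_cases hNE : ∃ t, P t ∧ a < t ∧ p a < p t
  · by_cases hSW : ∃ t, P t ∧ t < a ∧ p t < p a
    · obtain ⟨t, ht⟩ := hNE
      obtain ⟨s, hs⟩ := hSW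
      exact Or.inl ⟨s, t, hs.1, ht.1, hs.2.1, ht.2.1, hs.2.2, ht.2.2⟩
    · right
      obtain ⟨s, hs, hs'⟩ := h4
      obtain ⟨t, ht, ht'⟩ := h2
      refine ⟨s, t, hs, ht, ?_, ht', hs', ?_⟩
      · rcases lt_trichotomy a s with h | h | h
        · exact h
        · subst h; omega
        · exact absurd ⟨s, hs, h, hs'⟩ hSW
      · rcases lt_trichotomy (p a) (p t) with h | h | h
        · exact h
        · exact absurd (hp t ht h.symm) ht'.ne
        · exact absurd ⟨t, ht, ht', h⟩ hSW
  · right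
    obtain ⟨t, ht, ht'⟩ := h3
    obtain ⟨s, hs, hs'⟩ := h1
    refine ⟨s, t, hs, ht, hs', ?_, ?_, ht'⟩
    · rcases lt_trichotomy a t with h | h | h
      · exact absurd ⟨t, ht, h, ht'⟩ hNE
      · subst h; omega
      · exact h
    · rcases lt_trichotomy (p a) (p s) with h | h | h
      · exact absurd ⟨s, hs, hs', h⟩ hNE
      · exact absurd (hp s hs h.symm) hs'.ne'
      · exact h

/-- The core: a monochromatic edge set with more than `4(dx+dy)` edges gives a contradiction. -/
lemma core_contra {n : ℕ} (T : Finset (Fin n × Fin n)) (NA NB : Finset (Fin n))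
    (hNA : ∀ e ∈ T, e.1 ∈ NA) (hNB : ∀ e ∈ T, e.2 ∈ NB)
    (p q : Fin n → ℤ)
    (hp : ∀ a ∈ NA, ∀ a' ∈ NA, p a = p a' → a = a')
    (hq : ∀ a ∈ NB, ∀ a' ∈ NB, q a = q a' → a = a')
    (U W : Fin n × Fin n → ℤ)
    (hC : ∀ e ∈ T, ∀ e' ∈ T, e.1 ≠ e'.1 → e.2 ≠ e'.2 → (e.1 < e'.1 ↔ q e.2 < q e'.2) →
      |p e.1 - p e'.1| + W e + W e' < |q e.2 - q e'.2| + U e + U e')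
    (hD : ∀ e ∈ T, ∀ e' ∈ T, e.1 ≠ e'.1 → e.2 ≠ e'.2 → (e.2 < e'.2 ↔ p e.1 < p e'.1) →
      |q e.2 - q e'.2| + U e + U e' < |p e.1 - p e'.1| + W e + W e') :
    T.card ≤ 4 * (NA.card + NB.card) := by
  by_contra hcard
  push Not at hcard
  have inj1 : ∀ e ∈ T, ∀ e' ∈ T, e.2 = e'.2 → (e.1 : ℤ) = (e'.1 : ℤ) → e = e' := by
    intro e _ e' _ h1 h2
    exact Prod.ext (Fin.ext (by exact_mod_cast h2)) h1
  have inj2 : ∀ e ∈ T, ∀ e' ∈ T, e.1 = e'.1 → (e.2 : ℤ) = (e'.2 : ℤ) → e = e' := by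
    intro e _ e' _ h1 h2
    exact Prod.ext h1 (Fin.ext (by exact_mod_cast h2))
  have inj3 : ∀ e ∈ T, ∀ e' ∈ T, e.2 = e'.2 → p e.1 = p e'.1 → e = e' := by
    intro e he e' he' h1 h2
    exact Prod.ext (hp _ (hNA e he) _ (hNA e' he') h2) h1
  have inj4 : ∀ e ∈ T, ∀ e' ∈ T, e.1 = e'.1 → q e.2 = q e'.2 → e = e' := by
    intro e he e' he' h1 h2
    exact Prod.ext h1 (hq _ (hNB e he) _ (hNB e' he') h2)
  obtain ⟨S1, k1, z1⟩ := extremal_card T Prod.snd NB hNB (fun e => (e.1 : ℤ)) inj1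
  obtain ⟨S2, k2, z2⟩ := extremal_card T Prod.snd NB hNB (fun e => -(e.1 : ℤ))
    (fun e he e' he' h1 h2 => inj1 e he e' he' h1 (neg_injective h2))
  obtain ⟨S3, k3, z3⟩ := extremal_card T Prod.snd NB hNB (fun e => p e.1) inj3
  obtain ⟨S4, k4, z4⟩ := extremal_card T Prod.snd NB hNB (fun e => -p e.1)
    (fun e he e' he' h1 h2 => inj3 e he e' he' h1 (neg_injective h2))
  obtain ⟨S5, k5, z5⟩ := extremal_card T Prod.fst NA hNA (fun e => (e.2 : ℤ)) inj2
  obtain ⟨S6, k6, z6⟩ := extremal_card T Prod.fst NA hNA (fun e => -(e.2 : ℤ))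
    (fun e he e' he' h1 h2 => inj2 e he e' he' h1 (neg_injective h2))
  obtain ⟨S7, k7, z7⟩ := extremal_card T Prod.fst NA hNA (fun e => q e.2) inj4
  obtain ⟨S8, k8, z8⟩ := extremal_card T Prod.fst NA hNA (fun e => -q e.2)
    (fun e he e' he' h1 h2 => inj4 e he e' he' h1 (neg_injective h2))
  have hU : (S1 ∪ (S2 ∪ (S3 ∪ (S4 ∪ (S5 ∪ (S6 ∪ (S7 ∪ S8))))))).card < T.card := by
    have := Finset.card_union_le S1 (S2 ∪ (S3 ∪ (S4 ∪ (S5 ∪ (S6 ∪ (S7 ∪ S8))))))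
    have := Finset.card_union_le S2 (S3 ∪ (S4 ∪ (S5 ∪ (S6 ∪ (S7 ∪ S8)))))
    have := Finset.card_union_le S3 (S4 ∪ (S5 ∪ (S6 ∪ (S7 ∪ S8))))
    have := Finset.card_union_le S4 (S5 ∪ (S6 ∪ (S7 ∪ S8)))
    have := Finset.card_union_le S5 (S6 ∪ (S7 ∪ S8))
    have := Finset.card_union_le S6 (S7 ∪ S8)
    have := Finset.card_union_le S7 S8
    omega
  obtain ⟨⟨a, b⟩, heT, heU⟩ := Finset.exists_mem_notMem_of_card_lt_card hU
  simp only [Finset.mem_union, not_or] at heU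
  obtain ⟨n1, n2, n3, n4, n5, n6, n7, n8⟩ := heU
  obtain ⟨⟨a1, b1⟩, m1, e1, l1⟩ := z1 _ heT n1
  obtain ⟨⟨a2, b2⟩, m2, e2, l2⟩ := z2 _ heT n2
  obtain ⟨⟨a3, b3⟩, m3, e3, l3⟩ := z3 _ heT n3
  obtain ⟨⟨a4, b4⟩, m4, e4, l4⟩ := z4 _ heT n4
  obtain ⟨⟨a5, b5⟩, m5, e5, l5⟩ := z5 _ heT n5
  obtain ⟨⟨a6, b6⟩, m6, e6, l6⟩ := z6 _ heT n6
  obtain ⟨⟨a7, b7⟩, m7, e7, l7⟩ := z7 _ heT n7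
  obtain ⟨⟨a8, b8⟩, m8, e8, l8⟩ := z8 _ heT n8
  simp only at e1 e2 e3 e4 e5 e6 e7 e8 l1 l2 l3 l4 l5 l6 l7 l8
  subst e1 e2 e3 e4 e5 e6 e7 e8
  simp only [neg_lt_neg_iff, Nat.cast_lt, Fin.val_fin_lt] at l1 l2 l4 l5 l6 l8
  -- middles
  have midA : (∃ s t, (s, b4) ∈ T ∧ (t, b4) ∈ T ∧ s < a8 ∧ a8 < t ∧ p s < p a8 ∧ p a8 < p t) ∨
      (∃ s t, (s, b4) ∈ T ∧ (t, b4) ∈ T ∧ a8 < s ∧ t < a8 ∧ p s < p a8 ∧ p a8 < p t) := by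
    exact middle_aux (fun s => (s, b4) ∈ T) p a8
      (fun s hs h => hp _ (hNA _ hs) _ (hNA _ heT) h)
      ⟨_, m1, l1⟩ ⟨_, m2, l2⟩ ⟨_, m3, l3⟩ ⟨_, m4, l4⟩
  have midB : (∃ s t, (a8, s) ∈ T ∧ (a8, t) ∈ T ∧ s < b4 ∧ b4 < t ∧ q s < q b4 ∧ q b4 < q t) ∨
      (∃ s t, (a8, s) ∈ T ∧ (a8, t) ∈ T ∧ b4 < s ∧ t < b4 ∧ q s < q b4 ∧ q b4 < q t) := by
    exact middle_aux (fun s => (a8, s) ∈ T) q b4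
      (fun s hs h => hq _ (hNB _ hs) _ (hNB _ heT) h)
      ⟨_, m5, l5⟩ ⟨_, m6, l6⟩ ⟨_, m7, l7⟩ ⟨_, m8, l8⟩
  clear m1 m2 m3 m4 m5 m6 m7 m8 l1 l2 l3 l4 l5 l6 l7 l8
  clear k1 k2 k3 k4 k5 k6 k7 k8 hU z1 z2 z3 z4 z5 z6 z7 z8 inj1 inj2 inj3 inj4
  rcases midA with ⟨s, t, ms, mt, sa, ta, ps, pt⟩ | ⟨s, t, ms, mt, sa, ta, ps, pt⟩ <;>
  rcases midB with ⟨s', t', ms', mt', sb, tb, qs, qt⟩ | ⟨s', t', ms', mt', sb, tb, qs, qt⟩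
  · have c1 := hC _ ms' _ mt (by simp; omega) (by simp; omega) (by simp [*])
    have c2 := hD _ ms' _ mt (by simp; omega) (by simp; omega) (by simp [*])
    omega
  · have c1 := hC _ ms _ mt' (by simp; omega) (by simp; omega) (by simp [*])
    have c2 := hC _ ms' _ mt (by simp; omega) (by simp; omega) (by simp [*])
    have c3 := hD _ ms _ ms' (by simp; omega) (by simp; omega) (by simp [*])
    have c4 := hD _ mt' _ mt (by simp; omega) (by simp; omega) (by simp [*])
    simp only at c1 c2 c3 c4
    have := abs_sub_comm (q b4) (q s')
    have := abs_sub_comm (q t') (q b4)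
    omega
  · have c1 := hC _ mt _ mt' (by simp; omega) (by simp; omega) (by simp [*])
    have c2 := hC _ ms' _ ms (by simp; omega) (by simp; omega) (by simp [*])
    have c3 := hD _ ms _ mt' (by simp; omega) (by simp; omega) (by simp [*])
    have c4 := hD _ ms' _ mt (by simp; omega) (by simp; omega) (by simp [*])
    simp only at c1 c2 c3 c4
    have := abs_sub_comm (p t) (p a8)
    have := abs_sub_comm (p a8) (p s)
    omega
  · have c1 := hC _ mt _ mt' (by simp; omega) (by simp; omega)
      (by simp only; constructor <;> intro <;> omega)
    have c2 := hD _ mt _ mt' (by simp; omega) (by simp; omega)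
      (by simp only; constructor <;> intro <;> omega)
    omega

lemma local_bound {n : ℕ} (H : Finset (Fin n × Fin n)) (F G : Fin n → Fin n → ℤ)
    (hF : ∀ a b b', (a, b) ∈ H → (a, b') ∈ H → F a b = F a b' → b = b')
    (hG : ∀ a a' b, (a, b) ∈ H → (a', b) ∈ H → G a b = G a' b → a = a')
    (hC : ∀ x y a1 b1 a2 b2, (x, b1) ∈ H → (x, b2) ∈ H → (a1, y) ∈ H → (a2, y) ∈ H →
      (a1, b1) ∈ H → (a2, b2) ∈ H → a1 ≠ x → a2 ≠ x → b1 ≠ y → b2 ≠ y → a1 ≠ a2 → b1 ≠ b2 →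
      (a1 < x ↔ a2 < x) → (a1 < a2 ↔ F x b1 < F x b2) →
      (F a1 b1 < F a1 y ↔ F a2 b2 < F a2 y) →
      |G a1 y - G a2 y| + |G x b1 - G a1 b1| + |G x b2 - G a2 b2| <
        |F x b1 - F x b2| + |F a1 y - F a1 b1| + |F a2 y - F a2 b2|)
    (hD : ∀ x y a1 b1 a2 b2, (x, b1) ∈ H → (x, b2) ∈ H → (a1, y) ∈ H → (a2, y) ∈ H →
      (a1, b1) ∈ H → (a2, b2) ∈ H → a1 ≠ x → a2 ≠ x → b1 ≠ y → b2 ≠ y → a1 ≠ a2 → b1 ≠ b2 →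
      (b1 < y ↔ b2 < y) → (b1 < b2 ↔ G a1 y < G a2 y) →
      (G a1 b1 < G x b1 ↔ G a2 b2 < G x b2) →
      |F x b1 - F x b2| + |F a1 y - F a1 b1| + |F a2 y - F a2 b2| <
      |G a1 y - G a2 y| + |G x b1 - G a1 b1| + |G x b2 - G a2 b2|)
    (x y : Fin n) :
    (H.filter (fun e => (e.1, y) ∈ H ∧ (x, e.2) ∈ H)).card ≤
      65 * ((Finset.univ.filter (fun a => (a, y) ∈ H)).card +
        (Finset.univ.filter (fun b => (x, b) ∈ H)).card) := by
  classical
  set NA := Finset.univ.filter (fun a => (a, y) ∈ H) with hNA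
  set NB := Finset.univ.filter (fun b => (x, b) ∈ H) with hNB
  set T := H.filter (fun e => ((e.1, y) ∈ H ∧ (x, e.2) ∈ H) ∧ e.1 ≠ x ∧ e.2 ≠ y) with hT
  have hsub : H.filter (fun e => (e.1, y) ∈ H ∧ (x, e.2) ∈ H) ⊆
      T ∪ (NB.image (fun b => (x, b)) ∪ NA.image (fun a => (a, y))) := by
    rintro ⟨a, b⟩ he
    simp only [Finset.mem_filter] at he
    simp only [hT, hNA, hNB, Finset.mem_union, Finset.mem_filter, Finset.mem_image,
      Finset.mem_univ, true_and, Prod.mk.injEq]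
    by_cases h1 : a = x
    · subst h1; right; left; exact ⟨b, he.1, rfl, rfl⟩
    · by_cases h2 : b = y
      · subst h2; right; right; exact ⟨a, he.1, rfl, rfl⟩
      · left; exact ⟨he.1, he.2, h1, h2⟩
  have c1 := Finset.card_le_card hsub
  have c2 := Finset.card_union_le T (NB.image (fun b => (x, b)) ∪ NA.image (fun a => (a, y)))
  have c3 := Finset.card_union_le (NB.image (fun b => (x, b))) (NA.image (fun a => (a, y)))
  have c4 : (NB.image (fun b => (x, b))).card ≤ NB.card := Finset.card_image_le
  have c5 : (NA.image (fun a => (a, y))).card ≤ NA.card := Finset.card_image_le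
  let col : Fin n × Fin n → (Bool × Bool) × (Bool × Bool) := fun e =>
    ((decide (F e.1 e.2 < F e.1 y), decide (G e.1 e.2 < G x e.2)),
      (decide (e.1 < x), decide (e.2 < y)))
  have hmain : T.card ≤ (4 * (NA.card + NB.card)) * (T.image col).card := by
    apply Finset.card_le_mul_card_image
    intro k _
    apply core_contra _ NA NB (p := fun a => G a y) (q := fun b => F x b)
      (U := fun e => |F e.1 y - F e.1 e.2|) (W := fun e => |G x e.2 - G e.1 e.2|)
    · intro e he
      simp only [hT, Finset.mem_filter] at he
      simp [hNA, he]
    · intro e he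
      simp only [hT, Finset.mem_filter] at he
      simp [hNB, he]
    · intro a ha a' ha' h
      simp only [hNA, Finset.mem_filter] at ha ha'
      exact hG _ _ _ ha.2 ha'.2 h
    · intro a ha a' ha' h
      simp only [hNB, Finset.mem_filter] at ha ha'
      exact hF _ _ _ ha.2 ha'.2 h
    · rintro ⟨a, b⟩ he ⟨a', b'⟩ he' h1 h2 h3
      simp only [hT, Finset.mem_filter, col] at he he' h1 h2 h3 ⊢
      have hc := he.2.trans he'.2.symm
      simp only [Prod.mk.injEq, decide_eq_decide] at hc
      exact hC x y a b a' b' he.1.2.1.2 he'.1.2.1.2 he.1.2.1.1 he'.1.2.1.1 he.1.1 he'.1.1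
        he.1.2.2.1 he'.1.2.2.1 he.1.2.2.2 he'.1.2.2.2 h1 h2 hc.2.1 h3 hc.1.1
    · rintro ⟨a, b⟩ he ⟨a', b'⟩ he' h1 h2 h3
      simp only [hT, Finset.mem_filter, col] at he he' h1 h2 h3 ⊢
      have hc := he.2.trans he'.2.symm
      simp only [Prod.mk.injEq, decide_eq_decide] at hc
      exact hD x y a b a' b' he.1.2.1.2 he'.1.2.1.2 he.1.2.1.1 he'.1.2.1.1 he.1.1 he'.1.1
        he.1.2.2.1 he'.1.2.2.1 he.1.2.2.2 he'.1.2.2.2 h1 h2 hc.2.2 h3 hc.1.2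
  have c6 : (T.image col).card ≤ 16 := by
    refine (Finset.card_le_univ _).trans ?_
    simp [Fintype.card_prod]
  have c7 := Nat.mul_le_mul_left (4 * (NA.card + NB.card)) c6
  omega

lemma turan_bound {n : ℕ} (H : Finset (Fin n × Fin n))
    (hloc : ∀ x y : Fin n, (H.filter (fun e => (e.1, y) ∈ H ∧ (x, e.2) ∈ H)).card ≤
      65 * ((Finset.univ.filter (fun a => (a, y) ∈ H)).card +
        (Finset.univ.filter (fun b => (x, b) ∈ H)).card)) :
    H.card ^ 2 ≤ 4160 * n ^ 3 := by
  classical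
  set dA : Fin n → ℕ := fun a => (Finset.univ.filter (fun b => (a, b) ∈ H)).card with hdA
  set dB : Fin n → ℕ := fun b => (Finset.univ.filter (fun a => (a, b) ∈ H)).card with hdB
  have sA : ∑ a, dA a = H.card := by
    simp only [hdA, Finset.card_filter]
    rw [← Finset.sum_product', Finset.univ_product_univ, ← Finset.card_filter]
    simp
  have sB : ∑ a, dB a = H.card := by
    simp only [hdB, Finset.card_filter]
    rw [Finset.sum_comm, ← Finset.sum_product', Finset.univ_product_univ, ← Finset.card_filter]
    simp
  have hsum : ∑ e ∈ H, dA e.1 * dB e.2 ≤ 130 * n * H.card := by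
    have h1 : ∑ e ∈ H, dA e.1 * dB e.2 =
        ∑ x, ∑ y, (H.filter (fun e => (e.1, y) ∈ H ∧ (x, e.2) ∈ H)).card := by
      simp only [Finset.card_filter]
      have : ∀ x, ∑ y, ∑ e ∈ H, (if (e.1, y) ∈ H ∧ (x, e.2) ∈ H then 1 else 0) =
        ∑ e ∈ H, ∑ y, (if (e.1, y) ∈ H ∧ (x, e.2) ∈ H then 1 else 0) :=
        fun x => Finset.sum_comm
      simp only [this]
      rw [Finset.sum_comm]
      apply Finset.sum_congr rfl
      intro e _
      simp only [hdA, hdB, Finset.card_filter]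
      rw [Finset.sum_mul_sum, Finset.sum_comm]
      apply Finset.sum_congr rfl
      intro x _
      apply Finset.sum_congr rfl
      intro y _
      by_cases h1 : (e.1, y) ∈ H <;> by_cases h2 : (x, e.2) ∈ H <;> simp [h1, h2]
    rw [h1]
    calc ∑ x, ∑ y, (H.filter (fun e => (e.1, y) ∈ H ∧ (x, e.2) ∈ H)).card
        ≤ ∑ x : Fin n, ∑ y : Fin n, 65 * (dB y + dA x) :=
          Finset.sum_le_sum (fun x _ => Finset.sum_le_sum (fun y _ => hloc x y))
      _ = 130 * n * H.card := by
          simp only [← Finset.mul_sum, Finset.sum_add_distrib, sA, sB, Finset.sum_const,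
            Finset.card_univ, Fintype.card_fin, smul_eq_mul]
          ring
  -- edges with both degrees large
  set E := H.card with hE
  rcases Nat.eq_zero_or_pos n with hn | hn
  · subst hn
    have : H = ∅ := by
      ext ⟨a, b⟩; exact a.elim0
    simp [hE, this]
  have lowA : (H.filter (fun e => 4 * n * dA e.1 < E)).card * (4 * n) ≤ n * E := by
    have : (H.filter (fun e => 4 * n * dA e.1 < E)).card ≤
        ∑ a ∈ Finset.univ.filter (fun a => 4 * n * dA a < E), dA a := by
      rw [Finset.card_eq_sum_card_fiberwise (f := Prod.fst)
        (t := Finset.univ.filter (fun a => 4 * n * dA a < E))]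
      · apply Finset.sum_le_sum
        intro a _
        apply Finset.card_le_card_of_injOn Prod.snd
        · rintro ⟨a', b'⟩ he
          simp only [Finset.coe_filter, Finset.mem_filter, Set.mem_ofPred_eq, Finset.mem_univ,
            true_and] at he ⊢
          rw [← he.2]; exact he.1.1
        · rintro ⟨a', b'⟩ he ⟨a'', b''⟩ he' h
          simp only [Finset.coe_filter, Finset.mem_filter, Set.mem_ofPred_eq] at he he' h
          exact Prod.ext (he.2.trans he'.2.symm) h
      · intro e he
        simp only [Finset.coe_filter, Set.mem_ofPred_eq, Finset.mem_univ, true_and] at he ⊢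
        exact he.2
    refine (Nat.mul_le_mul_right _ this).trans ?_
    rw [Finset.sum_mul]
    calc _ ≤ ∑ a ∈ Finset.univ.filter (fun a => 4 * n * dA a < E), E := by
            apply Finset.sum_le_sum
            intro a ha
            simp only [Finset.mem_filter] at ha
            nlinarith [ha.2]
      _ ≤ n * E := by
            rw [Finset.sum_const, smul_eq_mul]
            apply Nat.mul_le_mul_right
            exact (Finset.card_le_univ _).trans (by simp)
  have lowB : (H.filter (fun e => 4 * n * dB e.2 < E)).card * (4 * n) ≤ n * E := by
    have : (H.filter (fun e => 4 * n * dB e.2 < E)).card ≤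
        ∑ a ∈ Finset.univ.filter (fun a => 4 * n * dB a < E), dB a := by
      rw [Finset.card_eq_sum_card_fiberwise (f := Prod.snd)
        (t := Finset.univ.filter (fun a => 4 * n * dB a < E))]
      · apply Finset.sum_le_sum
        intro a _
        apply Finset.card_le_card_of_injOn Prod.fst
        · rintro ⟨a', b'⟩ he
          simp only [Finset.coe_filter, Finset.mem_filter, Set.mem_ofPred_eq, Finset.mem_univ,
            true_and] at he ⊢
          rw [← he.2]; exact he.1.1
        · rintro ⟨a', b'⟩ he ⟨a'', b''⟩ he' h
          simp only [Finset.coe_filter, Finset.mem_filter, Set.mem_ofPred_eq] at he he' h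
          exact Prod.ext h (he.2.trans he'.2.symm)
      · intro e he
        simp only [Finset.coe_filter, Set.mem_ofPred_eq, Finset.mem_univ, true_and] at he ⊢
        exact he.2
    refine (Nat.mul_le_mul_right _ this).trans ?_
    rw [Finset.sum_mul]
    calc _ ≤ ∑ a ∈ Finset.univ.filter (fun a => 4 * n * dB a < E), E := by
            apply Finset.sum_le_sum
            intro a ha
            simp only [Finset.mem_filter] at ha
            nlinarith [ha.2]
      _ ≤ n * E := by
            rw [Finset.sum_const, smul_eq_mul]
            apply Nat.mul_le_mul_right
            exact (Finset.card_le_univ _).trans (by simp)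
  have lowA' : 4 * (H.filter (fun e => 4 * n * dA e.1 < E)).card ≤ E :=
    Nat.le_of_mul_le_mul_left (by linarith) hn
  have lowB' : 4 * (H.filter (fun e => 4 * n * dB e.2 < E)).card ≤ E :=
    Nat.le_of_mul_le_mul_left (by linarith) hn
  set Hi := H.filter (fun e => E ≤ 4 * n * dA e.1 ∧ E ≤ 4 * n * dB e.2) with hHi
  have hcov : H ⊆ Hi ∪ (H.filter (fun e => 4 * n * dA e.1 < E) ∪
      H.filter (fun e => 4 * n * dB e.2 < E)) := by
    intro e he
    simp only [hHi, Finset.mem_union, Finset.mem_filter, he, true_and]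
    omega
  have hHiE : E ≤ 2 * Hi.card := by
    have := Finset.card_le_card hcov
    have := Finset.card_union_le Hi (H.filter (fun e => 4 * n * dA e.1 < E) ∪
      H.filter (fun e => 4 * n * dB e.2 < E))
    have := Finset.card_union_le (H.filter (fun e => 4 * n * dA e.1 < E))
      (H.filter (fun e => 4 * n * dB e.2 < E))
    omega
  have hlow : Hi.card * E ^ 2 ≤ 16 * n ^ 2 * ∑ e ∈ H, dA e.1 * dB e.2 := by
    calc Hi.card * E ^ 2 = ∑ e ∈ Hi, E ^ 2 := by simp
      _ ≤ ∑ e ∈ Hi, 16 * n ^ 2 * (dA e.1 * dB e.2) := by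
          apply Finset.sum_le_sum
          intro e he
          simp only [hHi, Finset.mem_filter] at he
          have := Nat.mul_le_mul he.2.1 he.2.2
          nlinarith [this]
      _ = 16 * n ^ 2 * ∑ e ∈ Hi, (dA e.1 * dB e.2) := by rw [Finset.mul_sum]
      _ ≤ _ := by
          apply Nat.mul_le_mul_left
          exact Finset.sum_le_sum_of_subset (Finset.filter_subset _ _)
  rcases Nat.eq_zero_or_pos E with h0 | h0
  · rw [h0]; simp
  have : E * E ^ 2 ≤ E * (4160 * n ^ 3) := by
    calc E * E ^ 2 ≤ 2 * (Hi.card * E ^ 2) := by nlinarith [Nat.mul_le_mul_right (E ^ 2) hHiE]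
      _ ≤ 2 * (16 * n ^ 2 * (130 * n * E)) := by
          apply Nat.mul_le_mul_left
          exact hlow.trans (Nat.mul_le_mul_left _ hsum)
      _ = E * (4160 * n ^ 3) := by ring
  exact Nat.le_of_mul_le_mul_left this h0

/-- `l` is a walk of the digraph `E` from `A` to `B`. -/
def IsAB {V : Type*} (E : Finset (V × V)) (A B : Finset V) (l : List V) : Prop :=
  l.IsChain (fun u v => (u, v) ∈ E) ∧ (∃ a ∈ A, l.head? = some a) ∧ (∃ b ∈ B, l.getLast? = some b)

lemma exists_first {V : Type*} (P : V → Prop) (l : List V) (h : ∃ v ∈ l, P v) :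
    ∃ l1 v l2, l = l1 ++ v :: l2 ∧ P v ∧ ∀ u ∈ l1, ¬ P u := by
  induction l with
  | nil => simp at h
  | cons a t ih =>
    by_cases ha : P a
    · exact ⟨[], a, t, by simp, ha, by simp⟩
    · obtain ⟨v, hv, hPv⟩ := h
      have : v ∈ t := by
        rcases List.mem_cons.1 hv with h | h
        · subst h; exact absurd hPv ha
        · exact h
      obtain ⟨l1, w, l2, h1, h2, h3⟩ := ih ⟨v, this, hPv⟩
      refine ⟨a :: l1, w, l2, by simp [h1], h2, ?_⟩
      intro u hu
      rcases List.mem_cons.1 hu with h | h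
      · subst h; exact ha
      · exact h3 u h

lemma exists_last {V : Type*} (P : V → Prop) (l : List V) (h : ∃ v ∈ l, P v) :
    ∃ l1 v l2, l = l1 ++ v :: l2 ∧ P v ∧ ∀ u ∈ l2, ¬ P u := by
  obtain ⟨l1, v, l2, h1, h2, h3⟩ := exists_first P l.reverse (by simpa using h)
  refine ⟨l2.reverse, v, l1.reverse, ?_, h2, by simpa using h3⟩
  have := congrArg List.reverse h1
  simpa using this

lemma chain_first {V : Type*} [DecidableEq V] (E : Finset (V × V)) (x y : V) (l : List V) (v : V)
    (h : (l ++ [v]).IsChain (fun u v => (u, v) ∈ insert (x, y) E)) (hl : ∀ u ∈ l, u ≠ x) :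
    (l ++ [v]).IsChain (fun u v => (u, v) ∈ E) := by
  induction l with
  | nil => simp
  | cons a t ih =>
    have ih' := ih (by simpa using h.tail) (fun u hu => hl u (by simp [hu]))
    have ha := hl a (by simp)
    cases t with
    | nil => simp at h ⊢; grind
    | cons b t => simp at h ih' ⊢; grind

lemma chain_last {V : Type*} [DecidableEq V] (E : Finset (V × V)) (x y : V) (l : List V) (v : V)
    (h : (v :: l).IsChain (fun u v => (u, v) ∈ insert (x, y) E)) (hl : ∀ u ∈ l, u ≠ y) :
    (v :: l).IsChain (fun u v => (u, v) ∈ E) := by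
  induction l generalizing v with
  | nil => simp
  | cons a t ih =>
    have ih' := ih a (by simpa using h.tail) (fun u hu => hl u (by simp [hu]))
    have ha := hl a (by simp)
    simp only [List.isChain_cons_cons] at h ⊢
    grind

theorem menger {V : Type*} [DecidableEq V] (E : Finset (V × V)) :
    ∀ (A B : Finset V) (k : ℕ),
    (∀ S : Finset V, S.card < k → ∃ l, IsAB E A B l ∧ ∀ v ∈ l, v ∉ S) →
    ∃ P : Fin k → List V, (∀ i, IsAB E A B (P i) ∧ (P i).Nodup) ∧
      ∀ i j v, v ∈ P i → v ∈ P j → i = j := by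
  induction E using Finset.induction_on with
  | empty =>
    intro A B k h
    have hk : k ≤ (A ∩ B).card := by
      by_contra hlt
      push Not at hlt
      obtain ⟨l, ⟨hc, ⟨a, ha, hla⟩, ⟨b, hb, hlb⟩⟩, hl⟩ := h _ hlt
      cases l with
      | nil => simp at hla
      | cons c t =>
        cases t with
        | nil =>
          simp at hla hlb
          subst hla; subst hlb
          exact hl c (by simp) (by simp [ha, hb])
        | cons d t => simp at hc
    obtain ⟨T, hT, hTk⟩ := Finset.exists_subset_card_eq hk
    let e := (Finset.equivFinOfCardEq hTk).symm
    refine ⟨fun i => [(e i : V)], ?_, ?_⟩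
    · intro i
      have := hT (e i).2
      rw [Finset.mem_inter] at this
      exact ⟨⟨by simp, ⟨_, this.1, by simp⟩, ⟨_, this.2, by simp⟩⟩, by simp⟩
    · intro i j v hi hj
      simp at hi hj
      apply e.injective
      exact Subtype.ext (hi.symm.trans hj)
  | insert e E he ih =>
    obtain ⟨x, y⟩ := e
    intro A B k h
    by_cases hsep : ∀ S : Finset V, S.card < k → ∃ l, IsAB E A B l ∧ ∀ v ∈ l, v ∉ S
    · obtain ⟨P, hP, hd⟩ := ih A B k hsep
      refine ⟨P, fun i => ⟨⟨(hP i).1.1.imp ?_, (hP i).1.2⟩, (hP i).2⟩, hd⟩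
      intro a b hab
      simp [hab]
    push Not at hsep
    obtain ⟨S, hSk, hS⟩ := hsep
    have meetx : ∀ l, IsAB (insert (x, y) E) A B l → (∀ v ∈ l, v ≠ x) → ∃ v ∈ l, v ∈ S := by
      rintro l ⟨hc, hA, ⟨b, hb, hlb⟩⟩ hx
      apply hS l
      refine ⟨?_, hA, ⟨b, hb, hlb⟩⟩
      rcases List.eq_nil_or_concat l with rfl | ⟨l', v, rfl⟩
      · simp
      · rw [List.concat_eq_append] at hc hx ⊢
        exact chain_first E x y l' v hc (fun u hu => hx u (by simp [hu]))
    have meety : ∀ l, IsAB (insert (x, y) E) A B l → (∀ v ∈ l, v ≠ y) → ∃ v ∈ l, v ∈ S := by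
      rintro l ⟨hc, hA, ⟨b, hb, hlb⟩⟩ hx
      apply hS l
      refine ⟨?_, hA, ⟨b, hb, hlb⟩⟩
      cases l with
      | nil => simp
      | cons v l => exact chain_last E x y l v hc (fun u hu => hx u (by simp [hu]))
    obtain ⟨P, hP, hPd⟩ := ih A (insert x S) k (by
      intro S' hS'
      obtain ⟨l, hl, hl'⟩ := h S' hS'
      have hm : ∃ v ∈ l, v ∈ insert x S := by
        by_cases hx : ∀ v ∈ l, v ≠ x
        · obtain ⟨v, h1, h2⟩ := meetx l hl hx
          exact ⟨v, h1, by simp [h2]⟩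
        · push Not at hx
          obtain ⟨v, h1, h2⟩ := hx
          exact ⟨v, h1, by simp [h2]⟩
      obtain ⟨l1, v, l2, rfl, hv, hl1⟩ := exists_first _ l hm
      obtain ⟨hc, ⟨a, ha, hla⟩, -⟩ := hl
      refine ⟨l1 ++ [v], ⟨?_, ⟨a, ha, ?_⟩, ⟨v, hv, by simp⟩⟩, ?_⟩
      · apply chain_first E x y
        · rw [← List.singleton_append, ← List.append_assoc] at hc
          exact hc.left_of_append
        · intro u hu hux
          exact hl1 u hu (by simp [hux])
      · cases l1 <;> simpa using hla
      · intro u hu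
        apply hl'
        simp at hu ⊢
        tauto)
    obtain ⟨Q, hQ, hQd⟩ := ih (insert y S) B k (by
      intro S' hS'
      obtain ⟨l, hl, hl'⟩ := h S' hS'
      have hm : ∃ v ∈ l, v ∈ insert y S := by
        by_cases hx : ∀ v ∈ l, v ≠ y
        · obtain ⟨v, h1, h2⟩ := meety l hl hx
          exact ⟨v, h1, by simp [h2]⟩
        · push Not at hx
          obtain ⟨v, h1, h2⟩ := hx
          exact ⟨v, h1, by simp [h2]⟩
      obtain ⟨l1, v, l2, rfl, hv, hl1⟩ := exists_last _ l hm
      obtain ⟨hc, -, ⟨b, hb, hlb⟩⟩ := hl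
      refine ⟨v :: l2, ⟨?_, ⟨v, hv, by simp⟩, ⟨b, hb, ?_⟩⟩, ?_⟩
      · apply chain_last E x y
        · exact hc.right_of_append
        · intro u hu hux
          exact hl1 u hu (by simp [hux])
      · simpa using hlb
      · intro u hu
        apply hl'
        simp at hu ⊢
        tauto)
    have hPe := fun i => (hP i).1.2.2
    choose ep hepS hep using hPe
    have hQe := fun i => (hQ i).1.2.1
    choose sq hsqS hsq using hQe
    have hepm : ∀ i, ep i ∈ P i := fun i => List.mem_of_getLast? (hep i)
    have hsqm : ∀ i, sq i ∈ Q i := fun i => List.mem_of_head? (hsq i)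
    have epinj : Function.Injective ep := by
      intro i j hij
      exact hPd i j (ep i) (hepm i) (hij ▸ hepm j)
    have sqinj : Function.Injective sq := by
      intro i j hij
      exact hQd i j (sq i) (hsqm i) (hij ▸ hsqm j)
    have surj : ∀ (z : V) (f : Fin k → V), Function.Injective f → (∀ i, f i ∈ insert z S) →
        z ∉ S ∧ ∀ s ∈ insert z S, ∃ i, f i = s := by
      intro z f hf hfS
      have h1 : (Finset.univ.image f).card = k := by
        rw [Finset.card_image_of_injective _ hf]; simp
      have h2 : Finset.univ.image f ⊆ insert z S := by
        intro s hs
        simp at hs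
        obtain ⟨i, rfl⟩ := hs
        exact hfS i
      have h3 : Finset.univ.image f = insert z S :=
        Finset.eq_of_subset_of_card_le h2 (by
          rw [h1]; exact (Finset.card_insert_le _ _).trans hSk)
      constructor
      · intro hz
        rw [Finset.insert_eq_of_mem hz] at h3
        rw [h3] at h1
        omega
      · intro s hs
        rw [← h3] at hs
        simpa using hs
    obtain ⟨hxS, epsurj⟩ := surj x ep epinj hepS
    obtain ⟨hyS, sqsurj⟩ := surj y sq sqinj hsqS
    have cross : ∀ i j v, v ∈ P i → v ∈ Q j → v ∈ S ∧ v = ep i ∧ v = sq j := by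
      intro i j v hv hv'
      have k1 : ∀ u ∈ P i, u ∈ insert x S → u = ep i := by
        intro u hu huS
        obtain ⟨i', rfl⟩ := epsurj u huS
        rw [hPd i i' _ hu (hepm i')]
      have k2 : ∀ u ∈ Q j, u ∈ insert y S → u = sq j := by
        intro u hu huS
        obtain ⟨i', rfl⟩ := sqsurj u huS
        rw [hQd j i' _ hu (hsqm i')]
      by_cases hvS : v ∈ S
      · exact ⟨hvS, k1 v hv (by simp [hvS]), k2 v hv' (by simp [hvS])⟩
      exfalso
      obtain ⟨p1, p2, hp⟩ := List.append_of_mem hv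
      obtain ⟨q1, q2, hq⟩ := List.append_of_mem hv'
      obtain ⟨⟨hPc, ⟨a, ha, hPa⟩, -⟩, hPn⟩ := hP i
      obtain ⟨⟨hQc, -, ⟨b, hb, hQb⟩⟩, hQn⟩ := hQ j
      have e1 := hep i
      have e2 := hsq j
      rw [hp] at hPc hPa hPn e1
      rw [hq] at hQc hQb hQn e2
      have e1' : ep i ∈ v :: p2 := by
        rw [List.getLast?_append_cons] at e1
        exact List.mem_of_getLast? e1
      have e2' : sq j ∈ q1 ++ [v] := by
        apply List.mem_of_head?
        rw [← e2]
        cases q1 <;> simp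
      obtain ⟨u, hu, huS⟩ := hS (p1 ++ v :: q2) ⟨by
        rw [List.isChain_append] at hPc hQc ⊢
        refine ⟨hPc.1, hQc.2.1, ?_⟩
        simpa using hPc.2.2, ⟨a, ha, by cases p1 <;> simpa using hPa⟩, ⟨b, hb, by
          simpa using hQb⟩⟩
      simp only [List.mem_append, List.mem_cons] at hu
      rcases hu with hu | rfl | hu
      · have := k1 u (by rw [hp]; simp [hu]) (by simp [huS])
        rw [List.nodup_append] at hPn
        exact hPn.2.2 u hu _ e1' this
      · exact hvS huS
      · have := k2 u (by rw [hq]; simp [hu]) (by simp [huS])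
        rw [show q1 ++ v :: q2 = (q1 ++ [v]) ++ q2 by simp, List.nodup_append] at hQn
        exact hQn.2.2 _ e2' u hu this.symm
    have hj : ∀ i, ∃ j, (ep i = x → sq j = y) ∧ (ep i ≠ x → sq j = ep i) := by
      intro i
      by_cases hx : ep i = x
      · obtain ⟨j, hj⟩ := sqsurj y (by simp)
        exact ⟨j, fun _ => hj, fun h => absurd hx h⟩
      · have : ep i ∈ S := (Finset.mem_insert.1 (hepS i)).resolve_left hx
        obtain ⟨j, hj⟩ := sqsurj (ep i) (by simp [this])
        exact ⟨j, fun h => absurd h hx, fun _ => hj⟩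
    choose J hJ1 hJ2 using hj
    have epS : ∀ i, ep i ≠ x → ep i ∈ S := fun i hx =>
      (Finset.mem_insert.1 (hepS i)).resolve_left hx
    have Jinj : ∀ i i', J i = J i' → i = i' := by
      intro i i' hii
      apply epinj
      by_cases h1 : ep i = x <;> by_cases h2 : ep i' = x
      · rw [h1, h2]
      · exfalso
        have := hJ1 i h1
        rw [hii, hJ2 i' h2] at this
        exact hyS (this ▸ epS i' h2)
      · exfalso
        have := hJ1 i' h2
        rw [← hii, hJ2 i h1] at this
        exact hyS (this ▸ epS i h1)
      · rw [← hJ2 i h1, ← hJ2 i' h2, hii]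
    have mono : ∀ l : List V, l.IsChain (fun u v => (u, v) ∈ E) →
        l.IsChain (fun u v => (u, v) ∈ insert (x, y) E) := by
      intro l hl
      refine hl.imp ?_
      intro a b hab; simp [hab]
    refine ⟨fun i => if ep i = x then P i ++ Q (J i) else P i ++ (Q (J i)).tail, ?_, ?_⟩
    · intro i
      obtain ⟨⟨hPc, ⟨a, ha, hPa⟩, -⟩, hPn⟩ := hP i
      obtain ⟨⟨hQc, -, ⟨b, hb, hQb⟩⟩, hQn⟩ := hQ (J i)
      have e1 := hep i
      have e2 := hsq (J i)
      have hcr := cross i (J i)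
      have hPne : P i ≠ [] := by intro h0; rw [h0] at hPa; simp at hPa
      by_cases hx : ep i = x
      · simp only [hx, if_true]
        refine ⟨⟨?_, ⟨a, ha, ?_⟩, ⟨b, hb, ?_⟩⟩, ?_⟩
        · rw [List.isChain_append]
          refine ⟨mono _ hPc, mono _ hQc, ?_⟩
          rw [e1, e2, hJ1 i hx, hx]
          simp
        · rw [List.head?_append, hPa]; rfl
        · rw [List.getLast?_append, hQb]; rfl
        · rw [List.nodup_append]
          refine ⟨hPn, hQn, ?_⟩
          rintro u hu _ hu' rfl
          have := hcr u hu hu'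
          rw [hx] at this
          exact hxS (this.2.1 ▸ this.1)
      · simp only [hx, if_false]
        have hs := hJ2 i hx
        rw [hs] at e2 hcr
        generalize Q (J i) = q at *
        cases q with
        | nil => simp at e2
        | cons s t =>
          simp only [List.head?_cons, Option.some.injEq] at e2
          subst e2
          simp only [List.tail_cons]
          refine ⟨⟨?_, ⟨a, ha, ?_⟩, ⟨b, hb, ?_⟩⟩, ?_⟩
          · rw [List.isChain_append]
            refine ⟨mono _ hPc, (mono _ hQc).tail, ?_⟩
            rw [e1]
            have := mono _ hQc
            rw [List.isChain_cons] at this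
            simpa using this.1
          · rw [List.head?_append, hPa]; rfl
          · rw [List.getLast?_append]
            rw [List.getLast?_cons] at hQb
            rw [e1]
            cases ht : t.getLast? with
            | none => rw [ht] at hQb; simpa using hQb
            | some z => rw [ht] at hQb; simpa using hQb
          · rw [List.nodup_append]
            rw [List.nodup_cons] at hQn
            refine ⟨hPn, hQn.2, ?_⟩
            rintro u hu _ hu' rfl
            have := hcr u hu (by simp [hu'])
            exact hQn.1 (this.2.1 ▸ hu')
    · intro i i' v hv hv'
      have mem : ∀ i, v ∈ (if ep i = x then P i ++ Q (J i) else P i ++ (Q (J i)).tail) →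
          v ∈ P i ∨ v ∈ Q (J i) := by
        intro i hi
        split_ifs at hi
        · simpa using hi
        · rw [List.mem_append] at hi
          exact hi.imp id List.mem_of_mem_tail
      have pq : ∀ i i', v ∈ P i → v ∈ Q (J i') → i = i' := by
        intro i i' h1 h2
        obtain ⟨h3, h4, h5⟩ := cross i (J i') v h1 h2
        by_cases hx : ep i' = x
        · rw [hJ1 i' hx] at h5
          exact absurd (h5 ▸ h3) hyS
        · rw [hJ2 i' hx] at h5
          exact epinj (h4.symm.trans h5)
      rcases mem i hv with h1 | h1 <;> rcases mem i' hv' with h2 | h2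
      · exact hPd i i' v h1 h2
      · exact pq i i' h1 h2
      · exact (pq i' i h2 h1).symm
      · exact Jinj _ _ (hQd _ _ v h1 h2)

/-- there is a path from `u` to `v` with vertex set `S` -/
def PathOn {V : Type*} [DecidableEq V] (G : SimpleGraph V) (S : Finset V) (u v : V) : Prop :=
  ∃ p : G.Walk u v, p.IsPath ∧ p.support.toFinset = S

lemma PathOn.symm {V : Type*} [DecidableEq V] {G : SimpleGraph V} {S : Finset V} {u v : V}
    (h : PathOn G S u v) : PathOn G S v u := by
  obtain ⟨p, hp, hS⟩ := h
  exact ⟨p.reverse, hp.reverse, by simpa using hS⟩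

lemma PathOn.left_mem {V : Type*} [DecidableEq V] {G : SimpleGraph V} {S : Finset V} {u v : V}
    (h : PathOn G S u v) : u ∈ S := by
  obtain ⟨p, hp, hS⟩ := h
  rw [← hS]; simp

lemma PathOn.right_mem {V : Type*} [DecidableEq V] {G : SimpleGraph V} {S : Finset V} {u v : V}
    (h : PathOn G S u v) : v ∈ S := h.symm.left_mem

lemma PathOn.trans {V : Type*} [DecidableEq V] {G : SimpleGraph V} {S T : Finset V} {u v w : V}
    (h : PathOn G S u v) (h' : PathOn G T v w) (hd : ∀ z ∈ S, z ∈ T → z = v) :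
    PathOn G (S ∪ T) u w ∧ (S ∪ T).card + 1 = S.card + T.card := by
  constructor
  · obtain ⟨p, hp, hS⟩ := h
    obtain ⟨q, hq, hT⟩ := h'
    refine ⟨p.append q, ?_, ?_⟩
    · rw [Walk.isPath_def, Walk.support_append, List.nodup_append]
      refine ⟨hp.support_nodup, hq.support_nodup.tail, ?_⟩
      rintro a ha _ hb rfl
      have := hd a (by rw [← hS]; simpa using ha)
        (by rw [← hT]; simpa using List.mem_of_mem_tail hb)
      subst this
      have hn := hq.support_nodup
      rw [← Walk.cons_tail_support] at hn
      exact (List.nodup_cons.1 hn).1 hb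
    · ext z
      rw [← hS, ← hT]
      simp [Walk.mem_support_append_iff]
  · have : S ∩ T = {v} := by
      ext z
      simp only [Finset.mem_inter, Finset.mem_singleton]
      constructor
      · rintro ⟨h1, h2⟩; exact hd z h1 h2
      · rintro rfl; exact ⟨h.right_mem, h'.left_mem⟩
    have h2 := Finset.card_union_add_card_inter S T
    rw [this] at h2
    simpa using h2

lemma PathOn.close {V : Type*} [DecidableEq V] {G : SimpleGraph V} {S T : Finset V} {u v : V}
    {L : ℕ} (hL : ∀ (u : V) (c : G.Walk u u), c.IsCycle → c.length ≤ L)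
    (h : PathOn G S u v) (h' : PathOn G T v u) (huv : u ≠ v)
    (hd : ∀ z ∈ S, z ∈ T → z = u ∨ z = v) (h3 : 3 ≤ T.card) :
    S.card + T.card ≤ L + 2 := by
  obtain ⟨p, hp, hS⟩ := h
  obtain ⟨q, hq, hT⟩ := h'
  have lp : S.card = p.length + 1 := by
    rw [← hS, List.toFinset_card_of_nodup hp.support_nodup, Walk.length_support]
  have lq : T.card = q.length + 1 := by
    rw [← hT, List.toFinset_card_of_nodup hq.support_nodup, Walk.length_support]
  have hc : (p.append q).IsCycle := by
    apply hp.isCycle_append hq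
    · intro z hz hz'
      have hn := hq.support_nodup
      rw [← Walk.cons_tail_support] at hn
      have hn' := hp.support_nodup
      rw [← Walk.cons_tail_support] at hn'
      rcases hd z (by rw [← hS]; simpa using List.mem_of_mem_tail hz)
        (by rw [← hT]; simpa using List.mem_of_mem_tail hz') with rfl | rfl
      · exact (List.nodup_cons.1 hn').1 hz
      · exact (List.nodup_cons.1 hn).1 hz'
    · right; omega
  have := hL _ _ hc
  rw [Walk.length_append] at this
  omega

structure Cyc {V : Type*} (G : SimpleGraph V) (c : ℕ → V) (L : ℕ) : Prop where
  per : ∀ i, c (i + L) = c i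
  adj : ∀ i, G.Adj (c i) (c (i + 1))
  inj : ∀ i j, i < L → j < L → c i = c j → i = j
  pos : 0 < L

lemma Cyc.mod {V : Type*} {G : SimpleGraph V} {c : ℕ → V} {L : ℕ} (h : Cyc G c L) (i : ℕ) :
    c (i % L) = c i := by
  have : ∀ q r, c (r + L * q) = c r := by
    intro q
    induction q with
    | zero => simp
    | succ q ih => intro r; rw [Nat.mul_succ, ← Nat.add_assoc, h.per, ih]
  conv_rhs => rw [← Nat.mod_add_div i L]
  rw [this]

lemma Cyc.win {V : Type*} {G : SimpleGraph V} {c : ℕ → V} {L : ℕ} (h : Cyc G c L) {k l a : ℕ}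
    (h1 : a ≤ k) (h2 : k < a + L) (h3 : a ≤ l) (h4 : l < a + L) (he : c k = c l) : k = l := by
  have hm : k ≡ l [MOD L] := by
    apply h.inj _ _ (Nat.mod_lt _ h.pos) (Nat.mod_lt _ h.pos)
    rw [h.mod, h.mod, he]
  rcases le_total k l with hkl | hkl
  · have := (Nat.modEq_iff_dvd' hkl).1 hm
    have := Nat.eq_zero_of_dvd_of_lt this (by omega)
    omega
  · have := (Nat.modEq_iff_dvd' hkl).1 hm.symm
    have := Nat.eq_zero_of_dvd_of_lt this (by omega)
    omega

lemma Cyc.arc {V : Type*} [DecidableEq V] {G : SimpleGraph V} {c : ℕ → V} {L : ℕ}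
    (h : Cyc G c L) (i : ℕ) (m : ℕ) (hm : m < L) :
    PathOn G ((Finset.Icc i (i + m)).image c) (c i) (c (i + m)) ∧
      ((Finset.Icc i (i + m)).image c).card = m + 1 := by
  constructor
  · induction m with
    | zero => exact ⟨Walk.nil, by simp, by simp⟩
    | succ m ih =>
      have hstep : PathOn G {c (i + m), c (i + m + 1)} (c (i + m)) (c (i + m + 1)) := by
        refine ⟨(h.adj (i + m)).toWalk, ?_, ?_⟩
        · simp [(h.adj (i + m)).ne]
        · ext z; simp
      rw [← Nat.add_assoc]
      have := ((ih (by omega)).trans hstep ?_).1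
      · convert this using 1
        ext z
        simp only [Finset.mem_image, Finset.mem_Icc, Finset.mem_union, Finset.mem_insert,
          Finset.mem_singleton]
        constructor
        · rintro ⟨k, hk, rfl⟩
          by_cases hk' : k = i + m + 1
          · right; right; rw [hk']
          · left; exact ⟨k, by omega, rfl⟩
        · rintro (⟨k, hk, rfl⟩ | rfl | rfl)
          · exact ⟨k, by omega, rfl⟩
          · exact ⟨i + m, by omega, rfl⟩
          · exact ⟨i + m + 1, by omega, rfl⟩
      · intro z hz hz'
        simp only [Finset.mem_image, Finset.mem_Icc, Finset.mem_insert,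
          Finset.mem_singleton] at hz hz'
        rcases hz' with rfl | rfl
        · rfl
        · obtain ⟨k, hk, hk'⟩ := hz
          have := h.win (a := i) (by omega) (by omega) (by omega) (by omega) hk'
          omega
  · rw [Finset.card_image_of_injOn]
    · simp; omega
    · intro k hk l hl hkl
      simp only [Finset.coe_Icc, Set.mem_Icc] at hk hl
      exact h.win (a := i) (by omega) (by omega) (by omega) (by omega) hkl

lemma Cyc.arc' {V : Type*} [DecidableEq V] {G : SimpleGraph V} {c : ℕ → V} {L : ℕ}
    (h : Cyc G c L) {i j : ℕ} (hij : i ≤ j) (hj : j < i + L) :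
    PathOn G ((Finset.Icc i j).image c) (c i) (c j) ∧
      ((Finset.Icc i j).image c).card + i = j + 1 := by
  obtain ⟨m, rfl⟩ := Nat.exists_eq_add_of_le hij
  have := h.arc i m (by omega)
  exact ⟨this.1, by omega⟩

lemma exchange_one {V : Type*} [DecidableEq V] {G : SimpleGraph V} {c : ℕ → V} {L : ℕ}
    (h : Cyc G c L) (hL : ∀ (u : V) (c : G.Walk u u), c.IsCycle → c.length ≤ L)
    {i j : ℕ} (hij : i < j) (hj : j < i + L) {Q : Finset V} (hQ : PathOn G Q (c i) (c j))
    (hQc : ∀ k, c k ∈ Q → c k = c i ∨ c k = c j) (h3 : 3 ≤ Q.card) :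
    Q.card + i ≤ j + 1 := by
  obtain ⟨a1, a2⟩ := h.arc' (i := j) (j := i + L) (by omega) (by omega)
  rw [h.per] at a1
  have := PathOn.close hL a1 hQ (fun he => by
    have := h.win (a := i) (by omega) (by omega) (by omega) (by omega) he
    omega) (by
      intro z hz hz'
      simp only [Finset.mem_image] at hz
      obtain ⟨k, _, rfl⟩ := hz
      exact (hQc k hz').symm) h3
  omega

lemma exchange_three {V : Type*} [DecidableEq V] {G : SimpleGraph V} {c : ℕ → V} {L : ℕ}
    (h : Cyc G c L) (hL : ∀ (u : V) (c : G.Walk u u), c.IsCycle → c.length ≤ L)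
    {i1 j1 i2 j2 i3 j3 : ℕ} (h1 : i1 < j1) (h2 : j1 < i2) (h3 : i2 < j2) (h4 : j2 < i3)
    (h5 : i3 < j3) (h6 : j3 < i1 + L) {Q1 Q2 Q3 : Finset V}
    (p1 : PathOn G Q1 (c j1) (c j2)) (p2 : PathOn G Q2 (c i2) (c j3))
    (p3 : PathOn G Q3 (c i3) (c i1))
    (q1 : ∀ k, c k ∈ Q1 → c k = c j1 ∨ c k = c j2)
    (q2 : ∀ k, c k ∈ Q2 → c k = c i2 ∨ c k = c j3)
    (q3 : ∀ k, c k ∈ Q3 → c k = c i3 ∨ c k = c i1)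
    (d12 : ∀ z ∈ Q1, z ∉ Q2) (d13 : ∀ z ∈ Q1, z ∉ Q3) (d23 : ∀ z ∈ Q2, z ∉ Q3)
    (hc : 3 ≤ Q1.card) :
    Q1.card + Q2.card + Q3.card + (i1 + i2 + i3) ≤ j1 + j2 + j3 + 3 := by
  obtain ⟨x1, X1⟩ := h.arc' (i := j1) (j := i2) (by omega) (by omega)
  obtain ⟨x2, X2⟩ := h.arc' (i := j2) (j := i3) (by omega) (by omega)
  obtain ⟨x3, X3⟩ := h.arc' (i := j3) (j := i1 + L) (by omega) (by omega)
  rw [← h.per i1] at p3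
  simp only [← h.per i1] at q3
  have inj : ∀ k l, j1 ≤ k → k ≤ i1 + L → j1 ≤ l → l ≤ i1 + L → c k = c l → k = l := by
    intro k l a1 a2 a3 a4 he
    exact h.win (a := j1) (by omega) (by omega) (by omega) (by omega) he
  generalize hM : i1 + L = M at *
  have r1 : ∀ k, j1 ≤ k → k ≤ M → c k ∈ Q1 → k = j1 ∨ k = j2 := by
    intro k a1 a2 a3
    exact (q1 k a3).imp (inj k j1 a1 a2 (by omega) (by omega))
      (inj k j2 a1 a2 (by omega) (by omega))
  have r2 : ∀ k, j1 ≤ k → k ≤ M → c k ∈ Q2 → k = i2 ∨ k = j3 := by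
    intro k a1 a2 a3
    exact (q2 k a3).imp (inj k i2 a1 a2 (by omega) (by omega))
      (inj k j3 a1 a2 (by omega) (by omega))
  have r3 : ∀ k, j1 ≤ k → k ≤ M → c k ∈ Q3 → k = i3 ∨ k = M := by
    intro k a1 a2 a3
    exact (q3 k a3).imp (inj k i3 a1 a2 (by omega) (by omega))
      (inj k M a1 a2 (by omega) (by omega))
  have mI : ∀ i j z, z ∈ (Finset.Icc i j).image c → ∃ k, i ≤ k ∧ k ≤ j ∧ c k = z := by
    intro i j z hz
    simp only [Finset.mem_image, Finset.mem_Icc] at hz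
    obtain ⟨k, hk, hk'⟩ := hz
    exact ⟨k, hk.1, hk.2, hk'⟩
  obtain ⟨A1, B1⟩ := x1.trans p2 (by
    intro z hz hz'
    obtain ⟨k, k1, k2, rfl⟩ := mI _ _ _ hz
    have : k = i2 := by have := r2 k (by omega) (by omega) hz'; omega
    rw [this])
  obtain ⟨A2, B2⟩ := A1.trans x3 (by
    intro z hz hz'
    obtain ⟨k, k1, k2, rfl⟩ := mI _ _ _ hz'
    rcases Finset.mem_union.1 hz with hz | hz
    · obtain ⟨l, l1, l2, he⟩ := mI _ _ _ hz
      have := inj _ _ (by omega) (by omega) (by omega) (by omega) he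
      omega
    · have : k = j3 := by have := r2 k (by omega) (by omega) hz; omega
      rw [this])
  obtain ⟨A3, B3⟩ := A2.trans p3.symm (by
    intro z hz hz'
    rcases Finset.mem_union.1 hz with hz | hz
    · rcases Finset.mem_union.1 hz with hz | hz
      · obtain ⟨k, k1, k2, rfl⟩ := mI _ _ _ hz
        have := r3 k (by omega) (by omega) hz'
        omega
      · exact absurd hz' (d23 z hz)
    · obtain ⟨k, k1, k2, rfl⟩ := mI _ _ _ hz
      have : k = M := by have := r3 k (by omega) (by omega) hz'; omega
      rw [this])
  obtain ⟨A4, B4⟩ := A3.trans x2.symm (by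
    intro z hz hz'
    obtain ⟨k, k1, k2, rfl⟩ := mI _ _ _ hz'
    rcases Finset.mem_union.1 hz with hz | hz
    · rcases Finset.mem_union.1 hz with hz | hz
      · rcases Finset.mem_union.1 hz with hz | hz
        · obtain ⟨l, l1, l2, he⟩ := mI _ _ _ hz
          have := inj _ _ (by omega) (by omega) (by omega) (by omega) he
          omega
        · have := r2 k (by omega) (by omega) hz
          omega
      · obtain ⟨l, l1, l2, he⟩ := mI _ _ _ hz
        have := inj _ _ (by omega) (by omega) (by omega) (by omega) he
        omega
    · have : k = i3 := by have := r3 k (by omega) (by omega) hz; omega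
      rw [this])
  have := PathOn.close hL A4 p1.symm (fun he => by
    have := inj _ _ (by omega) (by omega) (by omega) (by omega) he
    omega) (by
      intro z hz hz'
      simp only [Finset.mem_union] at hz
      have key : ∀ k, c k ∈ Q1 → c k = c j1 ∨ c k = c j2 := q1
      rcases hz with (((hz | hz) | hz) | hz) | hz
      · obtain ⟨k, k1, k2, rfl⟩ := mI _ _ _ hz
        exact key k hz'
      · exact absurd hz (d12 z hz')
      · obtain ⟨k, k1, k2, rfl⟩ := mI _ _ _ hz
        exact key k hz'
      · exact absurd hz (d13 z hz')
      · obtain ⟨k, k1, k2, rfl⟩ := mI _ _ _ hz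
        exact key k hz') hc
  omega

structure Conf {V : Type*} [DecidableEq V] (G : SimpleGraph V) (c d : ℕ → V) (L n t : ℕ)
    (f g : Fin t → ℕ) (R : Fin t → Finset V) (sC sD : Fin t → Fin n) : Prop where
  cycC : Cyc G c L
  cycD : Cyc G d L
  max : ∀ (u : V) (w : G.Walk u u), w.IsCycle → w.length ≤ L
  path : ∀ i, PathOn G (R i) (c (f i)) (d (g i))
  fL : ∀ i, f i < L
  gL : ∀ i, g i < L
  disj : ∀ i j v, v ∈ R i → v ∈ R j → i = j
  RC : ∀ i k, c k ∈ R i → c k = c (f i)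
  RD : ∀ i k, d k ∈ R i → d k = d (g i)
  segC : ∀ i j k, sC i = sC j → f i ≤ k → k ≤ f j → ∀ l, c k ≠ d l
  segD : ∀ i j k, sD i = sD j → g i ≤ k → k ≤ g j → ∀ l, d k ≠ c l
  monoC : ∀ i j, sC i < sC j → f i < f j
  monoD : ∀ i j, sD i < sD j → g i < g j

section
variable {V : Type*} [DecidableEq V] {G : SimpleGraph V} {c d : ℕ → V} {L n t : ℕ}
    {f g : Fin t → ℕ} {R : Fin t → Finset V} {sC sD : Fin t → Fin n}

lemma Conf.symm (h : Conf G c d L n t f g R sC sD) : Conf G d c L n t g f R sD sC :=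
  ⟨h.cycD, h.cycC, h.max, fun i => (h.path i).symm, h.gL, h.fL, h.disj, h.RD, h.RC, h.segD,
    h.segC, h.monoD, h.monoC⟩

lemma Conf.finj (h : Conf G c d L n t f g R sC sD) {i j : Fin t} (hij : f i = f j) : i = j :=
  h.disj i j (c (f i)) (h.path i).left_mem (by rw [hij]; exact (h.path j).left_mem)

lemma Conf.link0 (h : Conf G c d L n t f g R sC sD) {i j : Fin t} (hij : i ≠ j)
    (hs : sD i = sD j) (hg : g i ≤ g j) : ∃ Q, PathOn G Q (c (f i)) (c (f j)) ∧
      |(g i : ℤ) - g j| + 3 ≤ Q.card ∧ (∀ k, c k ∈ Q → c k = c (f i) ∨ c k = c (f j)) ∧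
      ∀ v ∈ Q, v ∈ R i ∨ v ∈ R j ∨
        ∃ l, (g i ≤ l ∧ l ≤ g j ∨ g j ≤ l ∧ l ≤ g i) ∧ v = d l := by
  have hgL := h.gL j
  obtain ⟨a1, a2⟩ := h.cycD.arc' (i := g i) (j := g j) hg (by omega)
  have two : ∀ i, 2 ≤ (R i).card := by
    intro i
    have hne := h.segC i i (f i) rfl le_rfl le_rfl (g i)
    have : ({c (f i), d (g i)} : Finset V) ⊆ R i := by
      intro z hz
      simp only [Finset.mem_insert, Finset.mem_singleton] at hz
      rcases hz with rfl | rfl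
      · exact (h.path i).left_mem
      · exact (h.path i).right_mem
    have h2 := Finset.card_le_card this
    rwa [Finset.card_pair hne] at h2
  obtain ⟨b1, b2⟩ := (h.path i).trans a1 (by
    intro z hz hz'
    simp only [Finset.mem_image] at hz'
    obtain ⟨k, _, rfl⟩ := hz'
    exact h.RD i k hz)
  obtain ⟨c1, c2⟩ := b1.trans (h.path j).symm (by
    intro z hz hz'
    rcases Finset.mem_union.1 hz with hz | hz
    · exact absurd (h.disj i j z hz hz') hij
    · simp only [Finset.mem_image] at hz
      obtain ⟨k, _, rfl⟩ := hz
      exact h.RD j k hz')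
  refine ⟨_, c1, ?_, ?_, ?_⟩
  · have h1 := two i
    have h2 := two j
    rw [abs_of_nonpos (by omega)]
    omega
  · intro k hk
    simp only [Finset.mem_union] at hk
    rcases hk with (hk | hk) | hk
    · exact Or.inl (h.RC i k hk)
    · simp only [Finset.mem_image, Finset.mem_Icc] at hk
      obtain ⟨l, hl, he⟩ := hk
      exact absurd he (h.segD i j l hs hl.1 hl.2 k)
    · exact Or.inr (h.RC j k hk)
  · intro v hv
    simp only [Finset.mem_union] at hv
    rcases hv with (hk | hk) | hk
    · exact Or.inl hk
    · simp only [Finset.mem_image, Finset.mem_Icc] at hk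
      obtain ⟨l, hl, he⟩ := hk
      exact Or.inr (Or.inr ⟨l, Or.inl hl, he.symm⟩)
    · exact Or.inr (Or.inl hk)

lemma Conf.link (h : Conf G c d L n t f g R sC sD) {i j : Fin t} (hij : i ≠ j)
    (hs : sD i = sD j) : ∃ Q, PathOn G Q (c (f i)) (c (f j)) ∧
      |(g i : ℤ) - g j| + 3 ≤ Q.card ∧ (∀ k, c k ∈ Q → c k = c (f i) ∨ c k = c (f j)) ∧
      ∀ v ∈ Q, v ∈ R i ∨ v ∈ R j ∨
        ∃ l, (g i ≤ l ∧ l ≤ g j ∨ g j ≤ l ∧ l ≤ g i) ∧ v = d l := by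
  rcases le_total (g i) (g j) with hg | hg
  · exact h.link0 hij hs hg
  · obtain ⟨Q, h1, h2, h3, h4⟩ := h.link0 hij.symm hs.symm hg
    refine ⟨Q, h1.symm, by rwa [abs_sub_comm], fun k hk => (h3 k hk).symm, ?_⟩
    intro v hv
    rcases h4 v hv with a | a | ⟨l, a, b⟩
    · exact Or.inr (Or.inl a)
    · exact Or.inl a
    · exact Or.inr (Or.inr ⟨l, a.symm, b⟩)

lemma Conf.link_disj (h : Conf G c d L n t f g R sC sD) {i j i' j' : Fin t}
    (hs : sD i = sD j) (hs' : sD i' = sD j') (hne : sD i ≠ sD i') {v : V}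
    (h1 : v ∈ R i ∨ v ∈ R j ∨ ∃ l, (g i ≤ l ∧ l ≤ g j ∨ g j ≤ l ∧ l ≤ g i) ∧ v = d l)
    (h2 : v ∈ R i' ∨ v ∈ R j' ∨
      ∃ l, (g i' ≤ l ∧ l ≤ g j' ∨ g j' ≤ l ∧ l ≤ g i') ∧ v = d l) : False := by
  have key : (∃ k, (k = i ∨ k = j) ∧ v ∈ R k) ∨ 
      ∃ l, (g i ≤ l ∧ l ≤ g j ∨ g j ≤ l ∧ l ≤ g i) ∧ v = d l := by
    rcases h1 with h1 | h1 | h1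
    · exact Or.inl ⟨i, Or.inl rfl, h1⟩
    · exact Or.inl ⟨j, Or.inr rfl, h1⟩
    · exact Or.inr h1
  have key' : (∃ k, (k = i' ∨ k = j') ∧ v ∈ R k) ∨ 
      ∃ l, (g i' ≤ l ∧ l ≤ g j' ∨ g j' ≤ l ∧ l ≤ g i') ∧ v = d l := by
    rcases h2 with h1 | h1 | h1
    · exact Or.inl ⟨i', Or.inl rfl, h1⟩
    · exact Or.inl ⟨j', Or.inr rfl, h1⟩
    · exact Or.inr h1
  have gi := h.gL i
  have gj := h.gL j
  have gi' := h.gL i'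
  have gj' := h.gL j'
  have m : (g i < g i' ∧ g i < g j' ∧ g j < g i' ∧ g j < g j') ∨
      (g i' < g i ∧ g i' < g j ∧ g j' < g i ∧ g j' < g j) := by
    rcases lt_or_gt_of_ne hne with h0 | h0
    · left
      exact ⟨h.monoD _ _ h0, h.monoD _ _ (hs' ▸ h0), h.monoD _ _ (hs ▸ h0),
        h.monoD _ _ (hs ▸ hs' ▸ h0)⟩
    · right
      exact ⟨h.monoD _ _ h0, h.monoD _ _ (hs ▸ h0), h.monoD _ _ (hs' ▸ h0),
        h.monoD _ _ (hs ▸ hs' ▸ h0)⟩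
  rcases key with ⟨k, hk, hv⟩ | ⟨l, hl, hv⟩ <;> rcases key' with ⟨k', hk', hv'⟩ | ⟨l', hl', hv'⟩
  · have := h.disj _ _ _ hv hv'
    subst this
    rcases hk with rfl | rfl <;> rcases hk' with rfl | rfl <;> omega
  · subst hv'
    have := h.RD k l' hv
    have := h.cycD.inj l' (g k) (by omega) (h.gL k) this
    rcases hk with rfl | rfl <;> omega
  · subst hv
    have := h.RD k' l hv'
    have := h.cycD.inj l (g k') (by omega) (h.gL k') this
    rcases hk' with rfl | rfl <;> omega
  · have := h.cycD.inj l l' (by omega) (by omega) (hv ▸ hv')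
    omega

lemma Conf.one (h : Conf G c d L n t f g R sC sD) {i j : Fin t} (hij : i ≠ j)
    (hs : sD i = sD j) (hs' : sC i = sC j) : |(g i : ℤ) - g j| + 2 ≤ |(f i : ℤ) - f j| := by
  have key : ∀ i j : Fin t, i ≠ j → sD i = sD j → f i < f j →
      |(g i : ℤ) - g j| + 2 ≤ |(f i : ℤ) - f j| := by
    intro i j hij hs hf
    obtain ⟨Q, h1, h2, h3, h4⟩ := h.link hij hs
    have hfj := h.fL j
    have h0 := abs_nonneg ((g i : ℤ) - g j)
    have := exchange_one h.cycC h.max hf (by omega) h1 h3 (by omega)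
    rw [abs_of_nonpos (a := (f i : ℤ) - f j) (by omega)]
    omega
  rcases lt_trichotomy (f i) (f j) with hf | hf | hf
  · exact key i j hij hs hf
  · exact absurd (h.finj hf) hij
  · rw [abs_sub_comm, abs_sub_comm (f i : ℤ)]
    exact key j i hij.symm hs.symm hf

lemma Conf.simple (h : Conf G c d L n t f g R sC sD) {i j : Fin t}
    (hs : sD i = sD j) (hs' : sC i = sC j) : i = j := by
  by_contra hij
  have h1 := h.one hij hs hs'
  have h2 := h.symm.one hij hs' hs
  omega

lemma Conf.six0 (h : Conf G c d L n t f g R sC sD) {p1 p2 p3 p4 p5 p6 : Fin t}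
    (x1 : sC p1 = sC p2) (x2 : sC p3 = sC p5) (x3 : sC p4 = sC p6)
    (y1 : sD p3 = sD p4) (y2 : sD p1 = sD p5) (y3 : sD p2 = sD p6)
    (n1 : sC p3 ≠ sC p1) (n2 : sC p4 ≠ sC p1)
    (m1 : sD p1 ≠ sD p3) (m2 : sD p2 ≠ sD p3) (m3 : sD p1 ≠ sD p2)
    (o1 : sC p3 < sC p1 ↔ sC p4 < sC p1) (o2 : f p1 < f p2)
    (o3 : f p5 < f p3 ↔ f p6 < f p4) (hlt : sC p3 < sC p4) :
    |(g p3 : ℤ) - g p4| + |(g p1 : ℤ) - g p5| + |(g p2 : ℤ) - g p6| <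
      |(f p1 : ℤ) - f p2| + |(f p3 : ℤ) - f p5| + |(f p4 : ℤ) - f p6| := by
  have ne34 : p3 ≠ p4 := by rintro rfl; exact lt_irrefl _ hlt
  have ne15 : p1 ≠ p5 := by rintro rfl; exact n1 x2
  have ne26 : p2 ≠ p6 := by rintro rfl; exact n2 (x3.trans x1.symm)
  have ne35 : f p3 ≠ f p5 := by intro e; have := h.finj e; subst this; exact m1 y2
  have ne46 : f p4 ≠ f p6 := by
    intro e; have := h.finj e; subst this; exact m2 (y3.trans y1.symm)
  obtain ⟨Qy, a1, a2, a3, a4⟩ := h.link ne34 y1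
  obtain ⟨Qb, b1, b2, b3, b4⟩ := h.link ne15 y2
  obtain ⟨Qe, e1, e2, e3, e4⟩ := h.link ne26 y3
  have dyb : ∀ z ∈ Qy, z ∉ Qb := fun z hz hz' =>
    h.link_disj y1 y2 m1.symm (a4 z hz) (b4 z hz')
  have dye : ∀ z ∈ Qy, z ∉ Qe := fun z hz hz' =>
    h.link_disj y1 y3 m2.symm (a4 z hz) (e4 z hz')
  have dbe : ∀ z ∈ Qb, z ∉ Qe := fun z hz hz' =>
    h.link_disj y2 y3 m3 (b4 z hz) (e4 z hz')
  have dby : ∀ z ∈ Qb, z ∉ Qy := fun z hz hz' => dyb z hz' hz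
  have dey : ∀ z ∈ Qe, z ∉ Qy := fun z hz hz' => dye z hz' hz
  have deb : ∀ z ∈ Qe, z ∉ Qb := fun z hz hz' => dbe z hz' hz
  have P := h.cycC.per
  have l1 := h.fL p1
  have l2 := h.fL p2
  have l3 := h.fL p3
  have l4 := h.fL p4
  have l5 := h.fL p5
  have l6 := h.fL p6
  have r1 := h.monoC _ _ hlt
  have r2 := h.monoC p5 p4 (x2 ▸ hlt)
  have r3 := h.monoC p3 p6 (x3 ▸ hlt)
  have r4 := h.monoC p5 p6 (x2 ▸ x3 ▸ hlt)
  have A1 := abs_nonneg ((g p3 : ℤ) - g p4)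
  have A2 := abs_nonneg ((g p1 : ℤ) - g p5)
  have A3 := abs_nonneg ((g p2 : ℤ) - g p6)
  have B1 := neg_le_abs ((f p1 : ℤ) - f p2)
  have B2 := neg_le_abs ((f p3 : ℤ) - f p5)
  have B3 := neg_le_abs ((f p4 : ℤ) - f p6)
  have B4 := le_abs_self ((f p3 : ℤ) - f p5)
  have B5 := le_abs_self ((f p4 : ℤ) - f p6)
  have e3' := fun k hk => (e3 k hk).symm
  by_cases hx : sC p3 < sC p1
  · have hx' := o1.1 hx
    have q1 := h.monoC p3 p1 hx
    have q2 := h.monoC p4 p1 hx'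
    have q3 := h.monoC p5 p1 (x2 ▸ hx)
    have q4 := h.monoC p6 p1 (x3 ▸ hx')
    by_cases hu : f p5 < f p3
    · have hu' := o3.1 hu
      have := exchange_three h.cycC h.max hu r3 hu' q2 o2 (by omega) a1 e1.symm b1 a3 e3' b3
        dye dyb deb (by omega)
      omega
    · have hu' : ¬ f p6 < f p4 := fun hh => hu (o3.2 hh)
      have := exchange_three h.cycC h.max (i1 := f p4) (j1 := f p6) (i2 := f p1) (j2 := f p2)
        (i3 := f p3 + L) (j3 := f p5 + L) (by omega) (by omega) (by omega) (by omega) (by omega)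
        (by omega) e1.symm (by rw [P]; exact b1) (by rw [P]; exact a1) e3' (by rw [P]; exact b3)
        (by rw [P]; exact a3) deb dey dby (by omega)
      omega
  · have hx' : ¬ sC p4 < sC p1 := fun hh => hx (o1.2 hh)
    have z1 : sC p2 < sC p3 := x1 ▸ lt_of_le_of_ne (not_lt.1 hx) n1.symm
    have q1 := h.monoC p2 p3 z1
    have q3 := h.monoC p2 p5 (x2 ▸ z1)
    by_cases hu : f p5 < f p3
    · have hu' := o3.1 hu
      have := exchange_three h.cycC h.max (i3 := f p1 + L) (j3 := f p2 + L) hu r3 hu' (by omega)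
        (by omega) (by omega) a1 (by rw [P]; exact e1.symm) (by rw [P]; exact b1) a3
        (by rw [P]; exact e3') (by rw [P]; exact b3)
        dye dyb deb (by omega)
      omega
    · have hu' : ¬ f p6 < f p4 := fun hh => hu (o3.2 hh)
      have := exchange_three h.cycC h.max (i1 := f p4) (j1 := f p6) (i2 := f p1 + L)
        (j2 := f p2 + L)
        (i3 := f p3 + L) (j3 := f p5 + L) (by omega) (by omega) (by omega) (by omega) (by omega)
        (by omega) (by rw [P]; exact e1.symm) (by rw [P, P]; exact b1) (by rw [P]; exact a1)
        (by rw [P]; exact e3') (by rw [P, P]; exact b3)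
        (by rw [P]; exact a3) deb dey dby (by omega)
      omega

lemma Conf.six (h : Conf G c d L n t f g R sC sD) {p1 p2 p3 p4 p5 p6 : Fin t}
    (x1 : sC p1 = sC p2) (x2 : sC p3 = sC p5) (x3 : sC p4 = sC p6)
    (y1 : sD p3 = sD p4) (y2 : sD p1 = sD p5) (y3 : sD p2 = sD p6)
    (n1 : sC p3 ≠ sC p1) (n2 : sC p4 ≠ sC p1) (n3 : sC p3 ≠ sC p4)
    (m1 : sD p1 ≠ sD p3) (m2 : sD p2 ≠ sD p3) (m3 : sD p1 ≠ sD p2)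
    (o1 : sC p3 < sC p1 ↔ sC p4 < sC p1) (o2 : sC p3 < sC p4 ↔ f p1 < f p2)
    (o3 : f p5 < f p3 ↔ f p6 < f p4) :
    |(g p3 : ℤ) - g p4| + |(g p1 : ℤ) - g p5| + |(g p2 : ℤ) - g p6| <
      |(f p1 : ℤ) - f p2| + |(f p3 : ℤ) - f p5| + |(f p4 : ℤ) - f p6| := by
  rcases lt_or_gt_of_ne n3 with hlt | hlt
  · exact h.six0 x1 x2 x3 y1 y2 y3 n1 n2 m1 m2 m3 o1 (o2.1 hlt) o3 hlt
  · have ne : f p1 ≠ f p2 := by intro e; have := h.finj e; subst this; exact m3 rfl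
    have hf : f p2 < f p1 := by
      have : ¬ f p1 < f p2 := fun hh => absurd (o2.2 hh) (not_lt.2 hlt.le)
      omega
    have := h.six0 (p1 := p2) (p2 := p1) (p3 := p4) (p4 := p3) (p5 := p6) (p6 := p5)
      x1.symm x3 x2 y1.symm y3 y2 (x1 ▸ n2) (x1 ▸ n1) (y1 ▸ m2) (y1 ▸ m1) m3.symm
      (x1 ▸ o1.symm) hf o3.symm hlt
    rw [abs_sub_comm (g p4 : ℤ), abs_sub_comm (f p2 : ℤ)] at this
    linarith

end

lemma Conf.bound {V : Type*} [DecidableEq V] {G : SimpleGraph V} {c d : ℕ → V} {L n t : ℕ}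
    {f g : Fin t → ℕ} {R : Fin t → Finset V} {sC sD : Fin t → Fin n}
    (h : Conf G c d L n t f g R sC sD) : t ^ 2 ≤ 4160 * n ^ 3 ∧ t ≤ n ^ 2 := by
  classical
  let e : Fin t → Fin n × Fin n := fun i => (sC i, sD i)
  have einj : Function.Injective e := by
    intro i j hij
    have := Prod.ext_iff.1 hij
    exact h.simple this.2 this.1
  obtain ⟨H, hH⟩ : ∃ H, H = Finset.univ.image e := ⟨_, rfl⟩
  have hcard : H.card = t := by
    rw [hH, Finset.card_image_of_injective _ einj]; simp
  have hmem : ∀ a b, (a, b) ∈ H → ∃ i, a = sC i ∧ b = sD i := by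
    intro a b hab
    rw [hH] at hab
    simp only [Finset.mem_image, Finset.mem_univ, true_and, e, Prod.mk.injEq] at hab
    obtain ⟨i, h1, h2⟩ := hab
    exact ⟨i, h1.symm, h2.symm⟩
  obtain ⟨F, hF⟩ : ∃ F : Fin n → Fin n → ℤ, ∀ i, F (sC i) (sD i) = f i :=
    ⟨fun a b => Function.extend e (fun i => (f i : ℤ)) 0 (a, b), fun i => einj.extend_apply _ _ i⟩
  obtain ⟨K, hK⟩ : ∃ F : Fin n → Fin n → ℤ, ∀ i, F (sC i) (sD i) = g i :=
    ⟨fun a b => Function.extend e (fun i => (g i : ℤ)) 0 (a, b), fun i => einj.extend_apply _ _ i⟩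
  constructor
  · rw [← hcard]
    apply turan_bound
    intro x y
    apply local_bound H F K
    · intro a b b' h1 h2 h3
      obtain ⟨i, rfl, rfl⟩ := hmem _ _ h1
      obtain ⟨j, hj, rfl⟩ := hmem _ _ h2
      rw [hF, hj, hF] at h3
      have hh : i = j := h.finj (by exact_mod_cast h3)
      rw [hh]
    · intro a a' b h1 h2 h3
      obtain ⟨i, rfl, rfl⟩ := hmem _ _ h1
      obtain ⟨j, rfl, hj⟩ := hmem _ _ h2
      rw [hK, hj, hK] at h3
      have hh : i = j := h.symm.finj (by exact_mod_cast h3)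
      rw [hh]
    · intro x y a1 b1 a2 b2 h1 h2 h3 h4 h5 h6 n1 n2 m1 m2 n3 m3 o1 o2 o3
      obtain ⟨p1, c1, d1⟩ := hmem _ _ h1
      obtain ⟨p2, c2, d2⟩ := hmem _ _ h2
      obtain ⟨p3, c3, d3⟩ := hmem _ _ h3
      obtain ⟨p4, c4, d4⟩ := hmem _ _ h4
      obtain ⟨p5, c5, d5⟩ := hmem _ _ h5
      obtain ⟨p6, c6, d6⟩ := hmem _ _ h6
      have F1 : F x b1 = f p1 := by rw [c1, d1, hF]
      have F2 : F x b2 = f p2 := by rw [c2, d2, hF]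
      have F3 : F a1 y = f p3 := by rw [c3, d3, hF]
      have F4 : F a2 y = f p4 := by rw [c4, d4, hF]
      have F5 : F a1 b1 = f p5 := by rw [c5, d5, hF]
      have F6 : F a2 b2 = f p6 := by rw [c6, d6, hF]
      have K1 : K x b1 = g p1 := by rw [c1, d1, hK]
      have K2 : K x b2 = g p2 := by rw [c2, d2, hK]
      have K3 : K a1 y = g p3 := by rw [c3, d3, hK]
      have K4 : K a2 y = g p4 := by rw [c4, d4, hK]
      have K5 : K a1 b1 = g p5 := by rw [c5, d5, hK]
      have K6 : K a2 b2 = g p6 := by rw [c6, d6, hK]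
      rw [F1, F2] at o2
      rw [F3, F4, F5, F6] at o3
      rw [F1, F2, F3, F4, F5, F6, K1, K2, K3, K4, K5, K6]
      refine h.six (p1 := p1) (p2 := p2) (p3 := p3) (p4 := p4) (p5 := p5) (p6 := p6)
        ?_ ?_ ?_ ?_ ?_ ?_ ?_ ?_ ?_ ?_ ?_ ?_ ?_ ?_ ?_
      · rw [← c1, ← c2]
      · rw [← c3, ← c5]
      · rw [← c4, ← c6]
      · rw [← d3, ← d4]
      · rw [← d1, ← d5]
      · rw [← d2, ← d6]
      · rwa [← c3, ← c1]
      · rwa [← c4, ← c1]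
      · rwa [← c3, ← c4]
      · rwa [← d1, ← d3]
      · rwa [← d2, ← d3]
      · rwa [← d1, ← d2]
      · rwa [← c3, ← c1, ← c4]
      · rw [← c3, ← c4]; exact_mod_cast o2
      · exact_mod_cast o3
    · intro x y a1 b1 a2 b2 h1 h2 h3 h4 h5 h6 n1 n2 m1 m2 n3 m3 o1 o2 o3
      obtain ⟨p1, c1, d1⟩ := hmem _ _ h1
      obtain ⟨p2, c2, d2⟩ := hmem _ _ h2
      obtain ⟨p3, c3, d3⟩ := hmem _ _ h3
      obtain ⟨p4, c4, d4⟩ := hmem _ _ h4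
      obtain ⟨p5, c5, d5⟩ := hmem _ _ h5
      obtain ⟨p6, c6, d6⟩ := hmem _ _ h6
      have F1 : F x b1 = f p1 := by rw [c1, d1, hF]
      have F2 : F x b2 = f p2 := by rw [c2, d2, hF]
      have F3 : F a1 y = f p3 := by rw [c3, d3, hF]
      have F4 : F a2 y = f p4 := by rw [c4, d4, hF]
      have F5 : F a1 b1 = f p5 := by rw [c5, d5, hF]
      have F6 : F a2 b2 = f p6 := by rw [c6, d6, hF]
      have K1 : K x b1 = g p1 := by rw [c1, d1, hK]
      have K2 : K x b2 = g p2 := by rw [c2, d2, hK]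
      have K3 : K a1 y = g p3 := by rw [c3, d3, hK]
      have K4 : K a2 y = g p4 := by rw [c4, d4, hK]
      have K5 : K a1 b1 = g p5 := by rw [c5, d5, hK]
      have K6 : K a2 b2 = g p6 := by rw [c6, d6, hK]
      rw [K3, K4] at o2
      rw [K1, K2, K5, K6] at o3
      rw [F1, F2, F3, F4, F5, F6, K1, K2, K3, K4, K5, K6]
      refine (h.symm.six (p1 := p3) (p2 := p4) (p3 := p1) (p4 := p2) (p5 := p5) (p6 := p6)
        ?_ ?_ ?_ ?_ ?_ ?_ ?_ ?_ ?_ ?_ ?_ ?_ ?_ ?_ ?_)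
      · rw [← d3, ← d4]
      · rw [← d1, ← d5]
      · rw [← d2, ← d6]
      · rw [← c1, ← c2]
      · rw [← c3, ← c5]
      · rw [← c4, ← c6]
      · rwa [← d3, ← d1]
      · rwa [← d2, ← d3]
      · rwa [← d1, ← d2]
      · rwa [← c3, ← c1]
      · rwa [← c4, ← c1]
      · rwa [← c3, ← c4]
      · rwa [← d3, ← d1, ← d2]
      · rw [← d1, ← d2]; exact_mod_cast o2
      · exact_mod_cast o3
  · rw [← hcard]
    refine (Finset.card_le_univ H).trans ?_
    simp [sq]

lemma chain_iff_aux {V : Type*} (G : SimpleGraph V) (C D : Finset V) (l : List V) :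
    l.IsChain (fun u v => G.Adj u v ∧ u ∉ D ∧ v ∉ C) ↔
      l.IsChain G.Adj ∧ (∀ u ∈ l.tail, u ∉ C) ∧ ∀ u ∈ l.dropLast, u ∉ D := by
  induction l with
  | nil => simp
  | cons a t ih =>
    cases t with
    | nil => simp
    | cons b t =>
      simp only [List.isChain_cons_cons, List.tail_cons, List.dropLast_cons_cons,
        List.mem_cons, forall_eq_or_imp] at ih ⊢
      rw [ih]
      tauto

lemma chain_path {V : Type*} [DecidableEq V] (G : SimpleGraph V) (l : List V) :
    ∀ a b, l.IsChain G.Adj → l.Nodup → l.head? = some a → l.getLast? = some b →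
    PathOn G l.toFinset a b := by
  induction l with
  | nil => intro a b _ _ h; simp at h
  | cons x t ih =>
    intro a b hc hn ha hb
    simp only [List.head?_cons, Option.some.injEq] at ha
    subst ha
    cases t with
    | nil =>
      simp at hb
      subst hb
      exact ⟨Walk.nil, by simp, by simp⟩
    | cons y t =>
      rw [List.isChain_cons_cons] at hc
      obtain ⟨p, hp, hS⟩ := ih y b hc.2 hn.tail (by simp) (by simpa using hb)
      refine ⟨Walk.cons hc.1 p, ?_, ?_⟩
      · rw [Walk.cons_isPath_iff]
        refine ⟨hp, ?_⟩
        intro hx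
        have : x ∈ (y :: t).toFinset := by rw [← hS]; simpa using hx
        exact (List.nodup_cons.1 hn).1 (by simpa using this)
      · rw [Walk.support_cons, List.toFinset_cons, hS, List.toFinset_cons (a := x)]

lemma paths_exist {V : Type*} [Fintype V] [DecidableEq V] (G : SimpleGraph V) (r : ℕ)
    (conn : ∀ S : Finset V, S.card < r → (G.induce ((↑S : Set V)ᶜ)).Connected)
    (C D : Finset V) (hC : r ≤ C.card) (hD : r ≤ D.card) :
    ∃ (a b : Fin (r - (C ∩ D).card) → V) (R : Fin (r - (C ∩ D).card) → Finset V),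
      (∀ i, PathOn G (R i) (a i) (b i) ∧ a i ∈ C ∧ a i ∉ D ∧ b i ∈ D ∧ b i ∉ C ∧
        (∀ v ∈ R i, v ∈ C → v = a i) ∧ ∀ v ∈ R i, v ∈ D → v = b i) ∧
      ∀ i j v, v ∈ R i → v ∈ R j → i = j := by
  classical
  obtain ⟨E, hE⟩ : ∃ E : Finset (V × V), ∀ u v, (u, v) ∈ E ↔ G.Adj u v ∧ u ∉ D ∧ v ∉ C :=
    ⟨Finset.univ.filter (fun p => G.Adj p.1 p.2 ∧ p.1 ∉ D ∧ p.2 ∉ C), by simp⟩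
  have hE' : (fun u v => (u, v) ∈ E) = (fun u v => G.Adj u v ∧ u ∉ D ∧ v ∉ C) := by
    funext u v; exact propext (hE u v)
  obtain ⟨P, hP, hd⟩ := menger E (C \ D) (D \ C) (r - (C ∩ D).card) (by
    intro S hS
    have hT : (S ∪ (C ∩ D)).card < r := by
      have := Finset.card_union_le S (C ∩ D)
      omega
    have hcon := conn _ hT
    have pick : ∀ A B : Finset V, r ≤ A.card → (A ∩ B).card = (C ∩ D).card →
        ∃ a ∈ A \ B, a ∉ S := by
      intro A B hA hAB
      have h1 := Finset.card_sdiff_add_card_inter A B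
      exact Finset.exists_mem_notMem_of_card_lt_card (by omega)
    obtain ⟨a, ha, haS⟩ := pick C D hC rfl
    obtain ⟨b, hb, hbS⟩ := pick D C hD (by rw [Finset.inter_comm])
    simp only [Finset.mem_sdiff] at ha hb
    have ha' : a ∈ ((↑(S ∪ (C ∩ D)) : Set V)ᶜ) := by simp; tauto
    have hb' : b ∈ ((↑(S ∪ (C ∩ D)) : Set V)ᶜ) := by simp; tauto
    obtain ⟨w⟩ := hcon.preconnected ⟨a, ha'⟩ ⟨b, hb'⟩
    obtain ⟨l, hl⟩ : ∃ l, l = w.support.map Subtype.val := ⟨_, rfl⟩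
    have l1 : l.IsChain G.Adj := by
      rw [hl, List.isChain_map]
      exact w.isChain_adj_support.imp (fun x y hxy => by simpa using hxy)
    have l2 : ∀ v ∈ l, v ∉ S ∧ ¬ (v ∈ C ∧ v ∈ D) := by
      intro v hv
      rw [hl, List.mem_map] at hv
      obtain ⟨⟨v', hv'⟩, _, rfl⟩ := hv
      simp at hv'
      tauto
    have l3 : a ∈ l := by
      rw [hl, List.mem_map]; exact ⟨_, w.start_mem_support, rfl⟩
    have l4 : l.getLast? = some b := by
      rw [hl, List.getLast?_map, List.getLast?_eq_some_getLast w.support_ne_nil,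
        w.getLast_support]
      rfl
    obtain ⟨u1, v, u2, e1, hv, hu2⟩ := exists_last (· ∈ C) l ⟨a, l3, ha.1⟩
    have l5 : b ∈ v :: u2 := by
      rw [e1, List.getLast?_append_of_ne_nil _ (by simp)] at l4
      exact List.mem_of_getLast? l4
    obtain ⟨w1, z, w2, e2, hz, hw1⟩ := exists_first (· ∈ D) (v :: u2) ⟨b, l5, hb.1⟩
    have sub : ∀ x ∈ w1 ++ [z], x ∈ l := by
      intro x hx
      rw [e1, e2]
      simp at hx ⊢
      tauto
    have hhead : (w1 ++ [z]).head? = some v := by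
      have := congrArg List.head? e2
      cases w1 <;> simp at this ⊢ <;> exact this.symm
    refine ⟨w1 ++ [z], ⟨?_, ⟨v, ?_, hhead⟩, ⟨z, ?_, by simp⟩⟩, fun x hx => (l2 x (sub x hx)).1⟩
    · rw [hE', chain_iff_aux]
      refine ⟨?_, ?_, ?_⟩
      · rw [e1] at l1
        have := l1.right_of_append
        rw [e2, ← List.singleton_append, ← List.append_assoc] at this
        exact this.left_of_append
      · intro x hx
        apply hu2
        have := congrArg List.tail e2
        simp at this
        rw [this]
        cases w1 with
        | nil => simp at hx
        | cons q w1 => simp at hx ⊢; tauto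
      · simpa using hw1
    · have := (l2 v (sub v (List.mem_of_head? hhead))).2
      simp; tauto
    · have := (l2 z (sub z (by simp))).2
      simp; tauto)
  have h1 := fun i => (hP i).1.2.1
  have h2 := fun i => (hP i).1.2.2
  choose a ha ha' using h1
  choose b hb hb' using h2
  refine ⟨a, b, fun i => (P i).toFinset, fun i => ?_, fun i j v hi hj => hd i j v (by simpa using hi)
    (by simpa using hj)⟩
  have hc := (hP i).1.1
  rw [hE', chain_iff_aux] at hc
  have h3 := ha i
  have h4 := hb i
  rw [Finset.mem_sdiff] at h3 h4
  refine ⟨chain_path G _ _ _ hc.1 (hP i).2 (ha' i) (hb' i), h3.1, h3.2, h4.1, h4.2, ?_, ?_⟩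
  · intro v hv hvC
    simp only [List.mem_toFinset] at hv
    have k1 := ha' i
    have k2 := hc.2.1 v
    cases hl : P i with
    | nil => rw [hl] at hv; simp at hv
    | cons x t =>
      rw [hl] at hv k1 k2
      simp at hv k1 k2
      grind
  · intro v hv hvC
    simp only [List.mem_toFinset] at hv
    have k1 := hb' i
    have k2 := hc.2.2 v
    rcases List.eq_nil_or_concat (P i) with hl | ⟨t, x, hl⟩
    · rw [hl] at hv; simp at hv
    · rw [hl] at hv k1 k2
      simp at hv k1 k2
      grind

lemma long_cycle {V : Type*} [Fintype V] [DecidableEq V] (G : SimpleGraph V) (r : ℕ) (hr : 2 ≤ r)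
    (hV : r < Fintype.card V)
    (conn : ∀ S : Finset V, S.card < r → (G.induce ((↑S : Set V)ᶜ)).Connected)
    (L : ℕ) (hL : ∀ (u : V) (c : G.Walk u u), c.IsCycle → c.length ≤ L) : r ≤ L := by
  classical
  have deg : ∀ u, r ≤ (Finset.univ.filter (fun w => G.Adj u w)).card := by
    intro u
    by_contra hlt
    push Not at hlt
    have hcon := conn _ hlt
    obtain ⟨N, hN⟩ : ∃ N, N = Finset.univ.filter (fun w => G.Adj u w) := ⟨_, rfl⟩
    rw [← hN] at hlt hcon
    have hmem : ∀ w, w ∈ N ↔ G.Adj u w := by intro w; simp [hN]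
    obtain ⟨w, hw⟩ : ∃ w, w ∉ insert u N := by
      by_contra hall
      push Not at hall
      have : (insert u N) = Finset.univ := by ext z; simp [hall z, -Finset.mem_insert]
      have h2 := Finset.card_insert_le u N
      rw [this, Finset.card_univ] at h2
      omega
    simp only [Finset.mem_insert, not_or] at hw
    have hu : u ∈ ((↑N : Set V)ᶜ) := by simp [hmem]
    have hw' : w ∈ ((↑N : Set V)ᶜ) := by simp [hw.2]
    obtain ⟨p⟩ := hcon.preconnected ⟨u, hu⟩ ⟨w, hw'⟩
    cases p with
    | nil => exact hw.1 rfl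
    | @cons _ x _ hx p =>
      have h1 : G.Adj u x := by simpa using hx
      exact x.2 (by simpa using (hmem x).2 h1)
  have : Nonempty V := Fintype.card_pos_iff.1 (by omega)
  obtain ⟨S, hS, hmax⟩ := Finset.exists_max_image
    (Finset.univ.filter (fun S : Finset V => ∃ u v, PathOn G S u v)) Finset.card
    ⟨{Classical.arbitrary V}, by
      simp only [Finset.mem_filter, Finset.mem_univ, true_and]
      exact ⟨Classical.arbitrary V, Classical.arbitrary V, Walk.nil, Walk.IsPath.nil, by simp⟩⟩
  simp only [Finset.mem_filter, Finset.mem_univ, true_and] at hS hmax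
  obtain ⟨u, v, hp⟩ := hS
  have hnb : ∀ w, G.Adj u w → w ∈ S := by
    intro w hw
    by_contra hwS
    have hstep : PathOn G {w, u} w u := by
      refine ⟨hw.symm.toWalk, ?_, ?_⟩
      · simp [hw.symm.ne]
      · ext z; simp
    obtain ⟨h1, h2⟩ := hstep.trans hp (by
      intro z hz hz'
      simp at hz
      rcases hz with rfl | rfl
      · exact absurd hz' hwS
      · rfl)
    have h3 := hmax _ ⟨_, _, h1⟩
    rw [Finset.card_pair hw.symm.ne] at h2
    omega
  obtain ⟨p, hpp, hpS⟩ := hp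
  have hpos : ∀ w, G.Adj u w → ∃ k, k ≤ p.length ∧ p.getVert k = w := by
    intro w hw
    have := hnb w hw
    rw [← hpS, List.mem_toFinset, Walk.mem_support_iff_exists_getVert] at this
    obtain ⟨k, h1, h2⟩ := this
    exact ⟨k, h2, h1⟩
  obtain ⟨k, hk, hkl, hkr⟩ : ∃ k, G.Adj u (p.getVert k) ∧ k ≤ p.length ∧ r ≤ k := by
    by_contra hno
    push Not at hno
    have hsub : (Finset.univ.filter (fun w => G.Adj u w)) ⊆
        (Finset.Ioo 0 r).image p.getVert := by
      intro w hw
      simp only [Finset.mem_filter, Finset.mem_univ, true_and] at hw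
      obtain ⟨k, h1, h2⟩ := hpos w hw
      have h3 := hno k (by rw [h2]; exact hw) h1
      refine Finset.mem_image.2 ⟨k, ?_, h2⟩
      rw [Finset.mem_Ioo]
      refine ⟨Nat.pos_of_ne_zero ?_, h3⟩
      rintro rfl
      rw [Walk.getVert_zero] at h2
      exact hw.ne h2
    have h1 := (Finset.card_le_card hsub).trans Finset.card_image_le
    have h2 := deg u
    rw [Nat.card_Ioo] at h1
    omega
  have q1 : PathOn G {u, p.getVert k} u (p.getVert k) := by
    refine ⟨hk.toWalk, ?_, ?_⟩
    · simp [hk.ne]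
    · ext z; simp
  have q2 : (p.take k).IsPath := hpp.take k
  have q3 : ((p.take k).support.toFinset).card = k + 1 := by
    rw [List.toFinset_card_of_nodup q2.support_nodup, Walk.length_support, Walk.take_length]
    omega
  have q4 : PathOn G ((p.take k).support.toFinset) (p.getVert k) u :=
    PathOn.symm ⟨p.take k, q2, rfl⟩
  have := PathOn.close hL q1 q4 hk.ne (by
    intro z hz _
    simpa using hz) (by omega)
  rw [q3, Finset.card_pair hk.ne] at this
  omega

lemma labels {V : Type*} [DecidableEq V] {G : SimpleGraph V} {c : ℕ → V} {L : ℕ}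
    (h : Cyc G c L) (X D : Finset V) (hX : ∀ k, c k ∈ D → c k ∈ X) :
    ∃ s : ℕ → ℕ, (∀ i < L, s i < X.card + 1) ∧ Monotone s ∧ ∀ k, c k ∈ D → s k < s (k + 1) := by
  refine ⟨fun i => ((Finset.range i).filter (fun k => c k ∈ D)).card, ?_, ?_, ?_⟩
  · intro i hi
    rw [Nat.lt_succ_iff]
    apply Finset.card_le_card_of_injOn c
    · intro k hk
      simp at hk
      exact hX k hk.2
    · intro k hk l hl hkl
      simp at hk hl
      exact h.inj k l (by omega) (by omega) hkl
  · intro i j hij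
    apply Finset.card_le_card
    apply Finset.filter_subset_filter
    simpa using hij
  · intro k hk
    simp only
    rw [Finset.range_add_one, Finset.filter_insert, if_pos hk, Finset.card_insert_of_notMem]
    · omega
    · simp

lemma cyc_of_walk {V : Type*} [DecidableEq V] {G : SimpleGraph V} {u : V} (w : G.Walk u u)
    (hw : w.IsCycle) : ∃ c : ℕ → V, Cyc G c w.length ∧
      ∀ v, v ∈ w.support.toFinset ↔ ∃ k < w.length, c k = v := by
  have h3 := hw.three_le_length
  refine ⟨fun k => w.getVert (k % w.length), ⟨?_, ?_, ?_, by omega⟩, ?_⟩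
  · intro i; simp
  · intro i
    have hm := Nat.mod_lt i (show 0 < w.length by omega)
    have := w.adj_getVert_succ hm
    rw [Nat.add_mod, Nat.mod_eq_of_lt (show 1 < w.length by omega)]
    by_cases he : i % w.length + 1 = w.length
    · rw [he, Nat.mod_self, Walk.getVert_zero]
      rw [he, Walk.getVert_length] at this
      exact this
    · rw [Nat.mod_eq_of_lt (show i % w.length + 1 < w.length by omega)]
      exact this
  · intro i j hi hj hij
    simp only [Nat.mod_eq_of_lt hi, Nat.mod_eq_of_lt hj] at hij
    exact hw.getVert_injOn' (by simp; omega) (by simp; omega) hij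
  · intro v
    rw [List.mem_toFinset, Walk.mem_support_iff_exists_getVert]
    constructor
    · rintro ⟨k, h1, h2⟩
      by_cases he : k = w.length
      · refine ⟨0, by omega, ?_⟩
        rw [he, Walk.getVert_length] at h1
        simp [h1]
      · refine ⟨k, by omega, ?_⟩
        simp only
        rw [Nat.mod_eq_of_lt (by omega), h1]
    · rintro ⟨k, h1, h2⟩
      simp only [Nat.mod_eq_of_lt h1] at h2
      exact ⟨k, h2, by omega⟩

lemma conf_bound {V : Type*} [Fintype V] [DecidableEq V] (G : SimpleGraph V) (r : ℕ) (hr : 2 ≤ r)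
    (hV : r < Fintype.card V)
    (conn : ∀ S : Finset V, S.card < r → (G.induce ((↑S : Set V)ᶜ)).Connected)
    (u v : V) (c1 : G.Walk u u) (c2 : G.Walk v v) (h1 : IsLongestCycle G c1)
    (h2 : IsLongestCycle G c2) (m : ℕ)
    (hm : m = (c1.support.toFinset ∩ c2.support.toFinset).card) :
    (r - m) ^ 2 ≤ 4160 * (m + 1) ^ 3 ∧ r - m ≤ (m + 1) ^ 2 := by
  subst hm
  have hlen : c2.length = c1.length := le_antisymm (h1.2 _ _ h2.1) (h2.2 _ _ h1.1)
  have hrL := long_cycle G r hr hV conn c1.length h1.2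
  obtain ⟨c, hc, hcs⟩ := cyc_of_walk c1 h1.1
  obtain ⟨d, hd, hds⟩ := cyc_of_walk c2 h2.1
  rw [hlen] at hd hds
  obtain ⟨C, hC⟩ : ∃ C, C = c1.support.toFinset := ⟨_, rfl⟩
  obtain ⟨D, hD⟩ : ∃ D, D = c2.support.toFinset := ⟨_, rfl⟩
  rw [← hC] at hcs ⊢
  rw [← hD] at hds ⊢
  have hmax := h1.2
  generalize c1.length = L at *
  have card : ∀ (c : ℕ → V) (C : Finset V), Cyc G c L → (∀ v, v ∈ C ↔ ∃ k < L, c k = v) →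
      r ≤ C.card := by
    intro c C hc hcs
    have : (Finset.range L).image c ⊆ C := by
      intro z hz
      simp only [Finset.mem_image, Finset.mem_range] at hz
      exact (hcs z).2 hz
    have h2 := Finset.card_le_card this
    rw [Finset.card_image_of_injOn, Finset.card_range] at h2
    · omega
    · intro k hk l hl hkl
      simp at hk hl
      exact hc.inj k l hk hl hkl
  have cm : ∀ k, c k ∈ C := fun k =>
    (hcs _).2 ⟨k % L, Nat.mod_lt _ hc.pos, hc.mod k⟩
  have dm : ∀ k, d k ∈ D := fun k =>
    (hds _).2 ⟨k % L, Nat.mod_lt _ hd.pos, hd.mod k⟩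
  obtain ⟨a, b, R, hR, hdis⟩ := paths_exist G r conn C D (card c C hc hcs) (card d D hd hds)
  have e1 := fun i => (hcs (a i)).1 (hR i).2.1
  have e2 := fun i => (hds (b i)).1 (hR i).2.2.2.1
  choose f fL hf using e1
  choose g gL hg using e2
  obtain ⟨s, s1, s2, s3⟩ := labels hc (C ∩ D) D (fun k hk => Finset.mem_inter.2 ⟨cm k, hk⟩)
  obtain ⟨s', s1', s2', s3'⟩ := labels hd (C ∩ D) C (fun k hk => Finset.mem_inter.2 ⟨hk, dm k⟩)
  refine Conf.bound (G := G) (c := c) (d := d) (L := L) (f := f) (g := g) (R := R)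
    (sC := fun i => ⟨s (f i), s1 _ (fL i)⟩) (sD := fun i => ⟨s' (g i), s1' _ (gL i)⟩)
    ⟨hc, hd, hmax, ?_, fL, gL, hdis, ?_, ?_, ?_, ?_, ?_, ?_⟩
  · intro i; rw [hf, hg]; exact (hR i).1
  · intro i k hk; rw [hf]; exact (hR i).2.2.2.2.2.1 _ hk (cm k)
  · intro i k hk; rw [hg]; exact (hR i).2.2.2.2.2.2 _ hk (dm k)
  · intro i j k hs h3 h4 l he
    have hkD : c k ∈ D := by rw [he]; exact dm l
    have hne : k ≠ f j := by
      rintro rfl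
      rw [hf] at hkD
      exact (hR j).2.2.1 hkD
    simp only [Fin.mk.injEq] at hs
    have q1 := s3 k hkD
    have q2 := s2 h3
    have q3 := s2 (show k + 1 ≤ f j by omega)
    omega
  · intro i j k hs h3 h4 l he
    have hkD : d k ∈ C := by rw [he]; exact cm l
    have hne : k ≠ g j := by
      rintro rfl
      rw [hg] at hkD
      exact (hR j).2.2.2.2.1 hkD
    simp only [Fin.mk.injEq] at hs
    have q1 := s3' k hkD
    have q2 := s2' h3
    have q3 := s2' (show k + 1 ≤ g j by omega)
    omega
  · intro i j hs
    simp only [Fin.mk_lt_mk] at hs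
    by_contra hlt
    have := s2 (not_lt.1 hlt)
    omega
  · intro i j hs
    simp only [Fin.mk_lt_mk] at hs
    by_contra hlt
    have := s2' (not_lt.1 hlt)
    omega

lemma final_arith (r m : ℕ) (hr : 2 ≤ r) (h1 : (r - m) ^ 2 ≤ 4160 * (m + 1) ^ 3)
    (h2 : r - m ≤ (m + 1) ^ 2) : (1 / 300 : ℝ) * (r : ℝ) ^ ((5 : ℝ) / 8) ≤ m := by
  have hm : 1 ≤ m := by
    by_contra h0
    have : m = 0 := by omega
    subst this
    simp at h2
    omega
  obtain ⟨t, ht⟩ : ∃ t, t = r - m := ⟨_, rfl⟩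
  rw [← ht] at h1
  have hrt : r ≤ m + t := by omega
  have k1 : (m + 1) ^ 3 ≤ 8 * m ^ 3 := by
    calc (m + 1) ^ 3 ≤ (2 * m) ^ 3 := Nat.pow_le_pow_left (by omega) 3
      _ = 8 * m ^ 3 := by ring
  have k2 : m ^ 2 ≤ m ^ 3 := Nat.pow_le_pow_right hm (by norm_num)
  have k3 : r ^ 2 ≤ 90000 * m ^ 3 := by
    have : r ^ 2 ≤ (m + t) ^ 2 := Nat.pow_le_pow_left hrt 2
    have h3 : (m + t) ^ 2 ≤ 2 * m ^ 2 + 2 * t ^ 2 := by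
      zify
      nlinarith [sq_nonneg ((m : ℤ) - t)]
    omega
  have hm' : (1 : ℝ) ≤ m := by exact_mod_cast hm
  have k4 : (r : ℝ) ^ 2 ≤ (300 * (m : ℝ)) ^ 3 := by
    have : (r : ℝ) ^ 2 ≤ 90000 * (m : ℝ) ^ 3 := by exact_mod_cast k3
    have h4 : (0 : ℝ) ≤ (m : ℝ) ^ 3 := by positivity
    nlinarith
  have y1 : (1 : ℝ) ≤ 300 * (m : ℝ) := by linarith
  have k5 : (r : ℝ) ^ ((5 : ℝ) / 8) ≤ 300 * m := by
    calc (r : ℝ) ^ ((5 : ℝ) / 8) = ((r : ℝ) ^ 2) ^ ((5 : ℝ) / 16) := by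
          rw [← Real.rpow_natCast, ← Real.rpow_mul (by positivity)]
          norm_num
      _ ≤ ((300 * (m : ℝ)) ^ 3) ^ ((5 : ℝ) / 16) :=
          Real.rpow_le_rpow (by positivity) k4 (by norm_num)
      _ = (300 * (m : ℝ)) ^ ((15 : ℝ) / 16) := by
          rw [← Real.rpow_natCast (300 * (m : ℝ)) 3, ← Real.rpow_mul (by positivity)]
          norm_num
      _ ≤ (300 * (m : ℝ)) ^ (1 : ℝ) := Real.rpow_le_rpow_of_exponent_le y1 (by norm_num)
      _ = 300 * m := Real.rpow_one _
  linarith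

theorem longest_cycles_meet_in_r_connected :
    ∃ C : ℝ, 0 < C ∧
      ∀ (r : ℕ), 2 ≤ r →
      ∀ (V : Type) [Fintype V] [DecidableEq V] (G : SimpleGraph V),
        -- `G` is `r`-connected:
        r < Fintype.card V →
        (∀ S : Finset V, S.card < r → (G.induce ((↑S : Set V)ᶜ)).Connected) →
        ∀ (u v : V) (c1 : G.Walk u u) (c2 : G.Walk v v),
          IsLongestCycle G c1 → IsLongestCycle G c2 →
          C * (r : ℝ) ^ ((5 : ℝ) / 8) ≤
            ((c1.support.toFinset ∩ c2.support.toFinset).card : ℝ) := by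
  refine ⟨1 / 300, by norm_num, ?_⟩
  intro r hr V _ _ G hV conn u v c1 c2 h1 h2
  obtain ⟨k1, k2⟩ := conf_bound G r hr hV conn u v c1 c2 h1 h2 _ rfl
  exact final_arith r _ hr k1 k2
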